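/- arXiv:1703.02654 — 6 statements merged into one kernel-verified Lean document; each statement's English description precedes it below -/
import Mathlib

section
/- Let G be a finite simple graph containing at least one cycle, with girth g(G) (the length of a shortest cycle of G). If k belongs to the strong convexity spectrum S_SC(G) and k ≠ 1, then k ≥ g(G). -/
/-!  Common definitions: oriented graphs, geodesic convexity, convexity number,
strong convexity spectrum, and grid graphs. -/

variable {V : Type*}

/-- A directed walk of length `k` from `u` to `v` along the arc relation `A`,
encoded by the function `f` listing its vertices. -/
def IsDirWalk (A : V → V → Prop) (k : ℕ) (f : ℕ → V) (u v : V) : Prop :=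
  f 0 = u ∧ f k = v ∧ ∀ i, i < k → A (f i) (f (i + 1))

/-- There is a directed walk from `u` to `v`. -/
def DirReachable (A : V → V → Prop) (u v : V) : Prop :=
  ∃ k f, IsDirWalk A k f u v

/-- A digraph (given by its arc relation) is strongly connected. -/
def StrongConnected (A : V → V → Prop) : Prop :=
  ∀ u v : V, DirReachable A u v

/-- A `uv`-geodesic: a directed walk from `u` to `v` of minimum possible length
(such a walk is automatically a directed path). -/
def IsGeodesic (A : V → V → Prop) (k : ℕ) (f : ℕ → V) (u v : V) : Prop :=
  IsDirWalk A k f u v ∧ ∀ k' f', IsDirWalk A k' f' u v → k ≤ k'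

/-- A nonempty vertex set `C` is convex if every vertex lying on a geodesic
between two vertices of `C` (in either direction) belongs to `C`. -/
def DConvex (A : V → V → Prop) (C : Set V) : Prop :=
  C.Nonempty ∧ ∀ u ∈ C, ∀ v ∈ C, ∀ k f, IsGeodesic A k f u v → ∀ i ≤ k, f i ∈ C

/-- `A` is an orientation of the simple graph `G`: every arc is along an edge,
every edge gets an arc, and no edge gets both directions. -/
def IsOrientation (G : SimpleGraph V) (A : V → V → Prop) : Prop :=
  (∀ x y, A x y → G.Adj x y) ∧ (∀ x y, G.Adj x y → A x y ∨ A y x) ∧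
    (∀ x y, A x y → ¬ A y x)

/-- The convexity number of a digraph: the maximum cardinality of a proper convex set. -/
noncomputable def convexityNumber [Fintype V] (A : V → V → Prop) : ℕ :=
  sSup {k | ∃ C : Set V, DConvex A C ∧ C ≠ Set.univ ∧ C.ncard = k}

/-- The strong convexity spectrum of a graph: the set of convexity numbers of
its strongly connected orientations. -/
def strongConvexitySpectrum [Fintype V] (G : SimpleGraph V) : Set ℕ :=
  {k | ∃ A : V → V → Prop, IsOrientation G A ∧ StrongConnected A ∧ convexityNumber A = k}

/-- The grid graph `P_n □ P_m`. -/
def gridGraph (n m : ℕ) : SimpleGraph (Fin n × Fin m) :=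
  (SimpleGraph.pathGraph n).boxProd (SimpleGraph.pathGraph m)
open SimpleGraph in
theorem walk_of_dirWalk {V : Type*} (G : SimpleGraph V) (A : V → V → Prop)
    (hA : ∀ x y, A x y → G.Adj x y) (f : ℕ → V) (k : ℕ)
    (hf : ∀ i, i < k → A (f i) (f (i + 1))) :
    ∃ p : G.Walk (f 0) (f k), (∀ d ∈ p.darts, A d.fst d.snd) ∧
      ∀ w ∈ p.support, ∃ i ≤ k, f i = w := by
  induction k with
  | zero => exact ⟨Walk.nil, by simp, by simp⟩
  | succ k ih =>
    obtain ⟨p, h1, h2⟩ := ih (fun i hi => hf i (by omega))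
    refine ⟨p.concat (hA _ _ (hf k (by omega))), ?_, ?_⟩
    · intro d hd
      simp only [Walk.darts_concat, List.concat_eq_append, List.mem_append,
        List.mem_singleton] at hd
      rcases hd with hd | hd
      · exact h1 d hd
      · subst hd; exact hf k (by omega)
    · intro w hw
      simp only [Walk.support_concat, List.concat_eq_append, List.mem_append,
        List.mem_singleton] at hw
      rcases hw with hw | hw
      · obtain ⟨i, hi, e⟩ := h2 w hw
        exact ⟨i, by omega, e⟩
      · exact ⟨k + 1, le_rfl, hw.symm⟩

theorem exists_geodesic {V : Type*} (A : V → V → Prop) (u v : V) (h : DirReachable A u v) :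
    ∃ k f, IsGeodesic A k f u v := by
  classical
  have h' : ∃ k, ∃ f, IsDirWalk A k f u v := h
  obtain ⟨f, hf⟩ := Nat.find_spec h'
  exact ⟨Nat.find h', f, hf, fun k' f' hf' => Nat.find_min' h' ⟨f', hf'⟩⟩

theorem singleton_dConvex {V : Type*} (A : V → V → Prop) (u : V) : DConvex A {u} := by
  refine ⟨⟨u, rfl⟩, ?_⟩
  rintro a rfl b rfl k f ⟨hf, hm⟩ i hi
  have := hm 0 (fun _ => b) ⟨rfl, rfl, by simp⟩
  have : i = 0 := by omega
  subst this
  exact hf.1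

open SimpleGraph in
theorem girth_le_ncard {V : Type*} [Fintype V] (G : SimpleGraph V) (A : V → V → Prop)
    (hO : IsOrientation G A) (hS : StrongConnected A) (C : Set V) (hC : DConvex A C)
    (h1 : 1 < C.ncard) : G.girth ≤ C.ncard := by
  classical
  obtain ⟨u, hu, v, hv, huv⟩ := (Set.one_lt_ncard).1 h1
  obtain ⟨k, f, hg⟩ := exists_geodesic A u v (hS u v)
  have hk : 0 < k := by
    rcases Nat.eq_zero_or_pos k with rfl | h
    · exact absurd (hg.1.1.symm.trans hg.1.2.1) huv
    · exact h
  have hx : f 1 ∈ C := hC.2 u hu v hv k f hg 1 hk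
  have hux : A u (f 1) := by
    have := hg.1.2.2 0 hk
    rwa [hg.1.1] at this
  generalize f 1 = x at hx hux
  obtain ⟨m, e, he⟩ := exists_geodesic A x u (hS x u)
  obtain ⟨p, hp1, hp2⟩ := walk_of_dirWalk G A hO.1 e m he.1.2.2
  have hp3 : ∀ w ∈ p.support, w ∈ C := by
    intro w hw
    obtain ⟨i, hi, rfl⟩ := hp2 w hw
    exact hC.2 x hx u hu m e he i hi
  obtain ⟨rfl, rfl, -⟩ := he.1
  have hq := p.bypass_isPath
  have hcyc : (Walk.cons (hO.1 _ _ hux) p.bypass).IsCycle := by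
    rw [Walk.cons_isCycle_iff]
    refine ⟨hq, fun hmem => ?_⟩
    obtain ⟨d, hd, hde⟩ := List.mem_map.1 hmem
    have hdA := hp1 d (p.darts_bypass_subset hd)
    have hsnd : d.snd ∈ p.bypass.support.tail := by
      rw [← Walk.map_snd_darts]
      exact List.mem_map_of_mem hd
    rcases (dart_edge_eq_mk'_iff').1 hde with ⟨h1, h2⟩ | ⟨h1, h2⟩
    · have := hq.support_nodup
      rw [← Walk.cons_tail_support, List.nodup_cons] at this
      rw [h2] at hsnd
      exact this.1 hsnd
    · rw [h1, h2] at hdA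
      exact hO.2.2 _ _ hux hdA
  have hle := hcyc.girth_le_length
  rw [Walk.length_cons, ← Walk.length_support] at hle
  refine hle.trans ?_
  rw [← List.toFinset_card_of_nodup hq.support_nodup, ← Set.ncard_coe_finset]
  refine Set.ncard_le_ncard ?_ (Set.toFinite C)
  intro w hw
  exact hp3 w (p.support_bypass_subset (by simpa using hw))

/-- Every member of the strong convexity spectrum other than `1` is at least the girth. -/
theorem girth_le_of_mem_strongConvexitySpectrum {V : Type*} [Fintype V]
    (G : SimpleGraph V) (hcyc : ¬ G.IsAcyclic) (k : ℕ)
    (hk : k ∈ strongConvexitySpectrum G) (hk1 : k ≠ 1) :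
    G.girth ≤ (k : ℕ∞) := by
  classical
  obtain ⟨A, hO, hS, rfl⟩ := hk
  set T := {k | ∃ C : Set V, DConvex A C ∧ C ≠ Set.univ ∧ C.ncard = k} with hT
  have hb : BddAbove T := by
    refine ⟨Fintype.card V, ?_⟩
    rintro k ⟨C, -, -, rfl⟩
    rw [← Nat.card_eq_fintype_card]
    exact Set.ncard_le_card C
  have hne : 1 ∈ T := by
    have : ∃ (u v : V), u ≠ v := by
      by_contra hcon
      push Not at hcon
      apply hcyc
      intro v c hc
      cases c with
      | nil => exact hc.ne_nil rfl
      | cons h p => exact h.ne (hcon _ _)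
    obtain ⟨u, v, huv⟩ := this
    refine ⟨{u}, singleton_dConvex A u, ?_, Set.ncard_singleton u⟩
    intro h
    have : v ∈ ({u} : Set V) := h ▸ Set.mem_univ v
    exact huv this.symm
  have h1 : 1 ≤ convexityNumber A := le_csSup hb hne
  obtain ⟨C, hC, -, hn⟩ : convexityNumber A ∈ T := Nat.sSup_mem ⟨1, hne⟩ hb
  have := girth_le_ncard G A hO hS C hC (by omega)
  rw [hn] at this
  exact_mod_cast this
end

section
/- Let D be an oriented graph. If C ⊆ V(D) is a proper convex set of D that is maximal (with respect to inclusion) among proper convex sets of D, then the subdigraph of D induced by V(D) \ C is connected, i.e., its underlying undirected graph is connected. -/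
/-!  Common definitions: oriented graphs, geodesic convexity, convexity number,
strong convexity spectrum, and grid graphs. -/

variable {V : Type*}

/-- A subpath of a geodesic is a geodesic. -/
theorem IsGeodesic.sub {V : Type*} {A : V → V → Prop} {k : ℕ} {f : ℕ → V} {u v : V}
    (h : IsGeodesic A k f u v) {a b : ℕ} (hab : a ≤ b) (hb : b ≤ k) :
    IsGeodesic A (b - a) (fun t => f (a + t)) (f a) (f b) := by
  obtain ⟨⟨h0, hk, hs⟩, hmin⟩ := h
  refine ⟨⟨rfl, ?_, ?_⟩, ?_⟩
  · show f (a + (b - a)) = f b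
    congr 1
    omega
  · intro i hi
    exact hs (a + i) (by omega)
  · rintro k' g ⟨g0, gk, gs⟩
    have key := hmin (a + k' + (k - b))
      (fun t => if t < a then f t else if t < a + k' then g (t - a) else f (t - a - k' + b)) ?_
    · omega
    refine ⟨?_, ?_, ?_⟩
    · dsimp only
      split_ifs with h1 h2
      · exact h0
      · have : a = 0 := by omega
        subst this
        simpa [g0] using h0
      · have h3 : a = 0 := by omega
        have h4 : k' = 0 := by omega
        subst h3 h4
        simp only [Nat.sub_zero, Nat.zero_add]
        rw [← gk, g0, h0]
    · dsimp only
      rw [if_neg (by omega), if_neg (by omega), ← hk]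
      congr 1
      omega
    · intro t ht
      dsimp only
      by_cases h1 : t + 1 < a
      · rw [if_pos (by omega), if_pos h1]
        exact hs t (by omega)
      by_cases h2 : t < a
      · rw [if_pos h2, if_neg h1]
        have h3 : t + 1 = a := by omega
        have h4 := hs t (by omega)
        split_ifs with h5
        · rw [h3, Nat.sub_self, g0, ← h3]
          exact h4
        · have h6 : k' = 0 := by omega
          subst h6
          have h7 : t + 1 - a - 0 + b = b := by omega
          rw [h7, ← gk, g0, ← h3]
          exact h4
      rw [if_neg h2, if_neg h1]
      by_cases h3 : t + 1 < a + k'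
      · rw [if_pos (show t < a + k' by omega), if_pos h3]
        have h4 : t + 1 - a = t - a + 1 := by omega
        rw [h4]
        exact gs _ (by omega)
      rw [if_neg h3]
      by_cases h4 : t < a + k'
      · rw [if_pos h4]
        have h5 : t + 1 - a - k' + b = b := by omega
        have h6 : k' = t - a + 1 := by omega
        rw [h5, ← gk]
        have := gs (t - a) (by omega)
        rwa [← h6] at this
      · rw [if_neg h4]
        have h5 : t + 1 - a - k' + b = t - a - k' + b + 1 := by omega
        rw [h5]
        exact hs _ (by omega)

/-- If `C` is a maximal proper convex set of an oriented graph, then the subdigraph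
induced by the complement of `C` has a connected underlying graph. -/
theorem complement_of_maximal_convex_connected {V : Type*} [Fintype V]
    (G : SimpleGraph V) (A : V → V → Prop) (hor : IsOrientation G A)
    (C : Set V) (hC : DConvex A C) (hproper : C ≠ Set.univ)
    (hmax : ∀ C' : Set V, DConvex A C' → C' ≠ Set.univ → C ⊆ C' → C' = C) :
    (G.induce (Cᶜ : Set V)).Connected := by
  classical
  have hne : ∃ x, x ∉ C := by
    by_contra! hcon
    exact hproper (Set.eq_univ_of_forall hcon)
  obtain ⟨x0, hx0⟩ := hne
  haveI : Nonempty (Cᶜ : Set V) := ⟨⟨x0, hx0⟩⟩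
  refine SimpleGraph.Connected.mk ?_
  rintro x y
  by_contra hxy
  let C' : Set V := C ∪ {v | ∃ h : v ∈ Cᶜ, (G.induce (Cᶜ : Set V)).Reachable x ⟨v, h⟩}
  have hsub : C ⊆ C' := Set.subset_union_left
  have hxC : x.1 ∈ C' := Or.inr ⟨x.2, SimpleGraph.Reachable.refl x⟩
  have hyC : y.1 ∉ C' := by
    rintro (h | ⟨_, h⟩)
    · exact y.2 h
    · exact hxy h
  have hprop : C' ≠ Set.univ := fun h => hyC (h ▸ Set.mem_univ _)
  have hadj : ∀ p q, p ∉ C' → G.Adj p q → q ∉ C → q ∉ C' := by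
    rintro p q hp hpq hq (h | ⟨h, hr⟩)
    · exact hq h
    · have hpC : p ∈ Cᶜ := fun h' => hp (hsub h')
      refine hp (Or.inr ⟨hpC, hr.trans (SimpleGraph.Adj.reachable ?_)⟩)
      exact hpq.symm
  have hconv : DConvex A C' := by
    refine ⟨hC.1.mono hsub, ?_⟩
    intro u hu v hv k f hf i hi
    by_contra hfi
    have hback : ∃ a ≤ i, f a ∈ C := by
      by_contra! hcon
      have : ∀ j ≤ i, f (i - j) ∉ C' := by
        intro j
        induction j with
        | zero => intro _; exact hfi
        | succ j ih =>
          intro hj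
          refine hadj _ _ (ih (by omega)) ?_ (hcon _ (by omega))
          have h1 := hor.1 _ _ (hf.1.2.2 (i - (j + 1)) (by omega))
          have h2 : i - (j + 1) + 1 = i - j := by omega
          rw [h2] at h1
          exact h1.symm
      have h0 := this i le_rfl
      rw [Nat.sub_self, hf.1.1] at h0
      exact h0 hu
    have hforw : ∃ b, i ≤ b ∧ b ≤ k ∧ f b ∈ C := by
      by_contra! hcon
      have : ∀ j, i + j ≤ k → f (i + j) ∉ C' := by
        intro j
        induction j with
        | zero => intro _; exact hfi
        | succ j ih =>
          intro hj
          refine hadj _ _ (ih (by omega)) ?_ (hcon _ (by omega) hj)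
          exact hor.1 _ _ (hf.1.2.2 (i + j) (by omega))
      have h0 := this (k - i) (by omega)
      have h1 : i + (k - i) = k := by omega
      rw [h1, hf.1.2.1] at h0
      exact h0 hv
    obtain ⟨a, ha, haC⟩ := hback
    obtain ⟨b, hib, hbk, hbC⟩ := hforw
    have h := hC.2 _ haC _ hbC _ _ (hf.sub (ha.trans hib) hbk) (i - a) (by omega)
    have h1 : a + (i - a) = i := by omega
    rw [h1] at h
    exact hfi (hsub h)
  have heq := hmax C' hconv hprop hsub
  rw [heq] at hxC
  exact x.2 hxC
end

section
/- Let G be a finite triangle-free simple graph, let D be an orientation of G, let C be a convex set of D, and let x ∈ V(D) \ C be adjacent in G to some vertex y ∈ C. If the arc between x and y is oriented from x to y, then for every neighbor z of x in G with z ∈ C, the arc between x and z is oriented from x to z. If the arc between x and y is oriented from y to x, then for every neighbor z of x in G with z ∈ C, the arc between x and z is oriented from z to x. -/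
/-!  Common definitions: oriented graphs, geodesic convexity, convexity number,
strong convexity spectrum, and grid graphs. -/

variable {V : Type*}

/-- In an orientation of a triangle-free graph, a vertex `x` outside a convex set `C`
adjacent to a vertex of `C` has all its arcs towards `C` pointing the same way. -/
theorem arcs_to_convex_set_same_direction {V : Type*} [Fintype V]
    (G : SimpleGraph V) (htf : G.CliqueFree 3)
    (A : V → V → Prop) (hor : IsOrientation G A)
    (C : Set V) (hC : DConvex A C)
    (x : V) (hx : x ∉ C) (y : V) (hy : y ∈ C) (hadj : G.Adj x y) :
    (A x y → ∀ z : V, G.Adj x z → z ∈ C → A x z) ∧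
    (A y x → ∀ z : V, G.Adj x z → z ∈ C → A z x) := by
  obtain ⟨h1, h2, h3⟩ := hor
  have key : ∀ a ∈ C, ∀ b ∈ C, A a x → A x b → False := by
    intro a ha b hb hax hxb
    have hgeo : IsGeodesic A 2 (fun i => if i = 0 then a else if i = 1 then x else b) a b := by
      refine ⟨⟨by simp, by simp, ?_⟩, ?_⟩
      · intro i hi
        interval_cases i
        · simpa using hax
        · simpa using hxb
      · rintro k f ⟨hf0, hfk, hf⟩
        by_contra hk
        have hk2 : k < 2 := by omega
        interval_cases k
        · have hab : a = b := hf0.symm.trans hfk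
          subst hab
          exact h3 _ _ hax hxb
        · have hab := hf 0 (by norm_num)
          simp only [zero_add] at hab
          rw [hf0, hfk] at hab
          classical
          exact htf {a, x, b} (SimpleGraph.is3Clique_triple_iff.2
            ⟨h1 _ _ hax, h1 _ _ hab, h1 _ _ hxb⟩)
    have := hC.2 a ha b hb 2 _ hgeo 1 (by norm_num)
    exact hx (by simpa using this)
  refine ⟨fun hxy z hz hzC => ?_, fun hyx z hz hzC => ?_⟩
  · exact (h2 x z hz).resolve_right fun h => key z hzC y hy h hxy
  · exact (h2 x z hz).resolve_left fun h => key y hy z hzC hyx h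
end

section
/- Let n, m ≥ 2 be integers and let D be the whirlpool orientation of the grid P_n □ P_m. Then D is strongly connected and con(D) = 1, i.e., every convex set of D other than V(D) itself is a single vertex. -/
/-!  Common definitions: oriented graphs, geodesic convexity, convexity number,
strong convexity spectrum, and grid graphs. -/

variable {V : Type*}

/-- The whirlpool orientation of the grid `P_n □ P_m`: the edge
`{(i,j),(i,j+1)}` is oriented `(i,j)→(i,j+1)` iff `i ≡ j (mod 2)`, and the edge
`{(i,j),(i+1,j)}` is oriented `(i+1,j)→(i,j)` iff `i ≡ j (mod 2)`. -/
def whirlpoolAdj (n m : ℕ) (p q : Fin n × Fin m) : Prop :=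
  (p.1 = q.1 ∧ ((q.2.val = p.2.val + 1 ∧ p.1.val % 2 = p.2.val % 2) ∨
                (p.2.val = q.2.val + 1 ∧ p.1.val % 2 ≠ q.2.val % 2))) ∨
  (p.2 = q.2 ∧ ((p.1.val = q.1.val + 1 ∧ q.1.val % 2 = p.2.val % 2) ∨
                (q.1.val = p.1.val + 1 ∧ p.1.val % 2 ≠ p.2.val % 2)))

lemma whirl_sq (n m : ℕ) (i j : ℕ) (hi : i + 1 < n) (hj : j + 1 < m) :
    let a : Fin n × Fin m := (⟨i, by omega⟩, ⟨j, by omega⟩)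
    let b : Fin n × Fin m := (⟨i, by omega⟩, ⟨j + 1, hj⟩)
    let c : Fin n × Fin m := (⟨i + 1, hi⟩, ⟨j + 1, hj⟩)
    let d : Fin n × Fin m := (⟨i + 1, hi⟩, ⟨j, by omega⟩)
    (whirlpoolAdj n m a b ∧ whirlpoolAdj n m b c ∧ whirlpoolAdj n m c d ∧ whirlpoolAdj n m d a) ∨
    (whirlpoolAdj n m b a ∧ whirlpoolAdj n m c b ∧ whirlpoolAdj n m d c ∧
      whirlpoolAdj n m a d) := by
  intro a b c d
  by_cases h : i % 2 = j % 2
  · left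
    refine ⟨Or.inl ⟨rfl, Or.inl ⟨rfl, h⟩⟩, Or.inr ⟨rfl, Or.inr ⟨rfl, ?_⟩⟩,
      Or.inl ⟨rfl, Or.inr ⟨rfl, ?_⟩⟩, Or.inr ⟨rfl, Or.inl ⟨rfl, h⟩⟩⟩
    · change i % 2 ≠ (j + 1) % 2
      omega
    · change (i + 1) % 2 ≠ j % 2
      omega
  · right
    refine ⟨Or.inl ⟨rfl, Or.inr ⟨rfl, h⟩⟩, Or.inr ⟨rfl, Or.inl ⟨rfl, ?_⟩⟩,
      Or.inl ⟨rfl, Or.inl ⟨rfl, ?_⟩⟩, Or.inr ⟨rfl, Or.inr ⟨rfl, h⟩⟩⟩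
    · change i % 2 = (j + 1) % 2
      omega
    · change (i + 1) % 2 = j % 2
      omega

/-- Square propagation on natural number coordinates. -/
lemma grid_prop (n m : ℕ) (T : ℕ → ℕ → Prop)
    (H : ∀ i j, i + 1 < n → j + 1 < m →
      (T i j ∧ T i (j + 1)) ∨ (T i (j + 1) ∧ T (i + 1) (j + 1)) ∨
      (T (i + 1) (j + 1) ∧ T (i + 1) j) ∨ (T (i + 1) j ∧ T i j) →
      T i j ∧ T i (j + 1) ∧ T (i + 1) (j + 1) ∧ T (i + 1) j)
    (i₀ j₀ : ℕ) (hi₀ : i₀ + 1 < n) (hj₀ : j₀ + 1 < m)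
    (h : (T i₀ j₀ ∧ T i₀ (j₀ + 1)) ∨ (T i₀ (j₀ + 1) ∧ T (i₀ + 1) (j₀ + 1)) ∨
      (T (i₀ + 1) (j₀ + 1) ∧ T (i₀ + 1) j₀) ∨ (T (i₀ + 1) j₀ ∧ T i₀ j₀)) :
    ∀ i j, i < n → j < m → T i j := by
  let Q : ℕ → ℕ → Prop := fun i j =>
    T i j ∧ T i (j + 1) ∧ T (i + 1) (j + 1) ∧ T (i + 1) j
  have h0 : Q i₀ j₀ := H _ _ hi₀ hj₀ h
  have d1 : ∀ i j, i + 1 < n → j + 1 < m → Q i j → Q 0 j := by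
    intro i j
    induction i with
    | zero => intro _ _ h; exact h
    | succ i ih =>
      intro hi hj h
      refine ih (by omega) hj (H _ _ (by omega) hj ?_)
      obtain ⟨h1, h2, h3, h4⟩ := h
      exact Or.inr (Or.inr (Or.inl ⟨h2, h1⟩))
  have d2 : ∀ j, 1 < n → j + 1 < m → Q 0 j → Q 0 0 := by
    intro j
    induction j with
    | zero => intro _ _ h; exact h
    | succ j ih =>
      intro hi hj h
      refine ih (by omega) (by omega) (H _ _ (by omega) (by omega) ?_)
      obtain ⟨h1, h2, h3, h4⟩ := h
      exact Or.inr (Or.inl ⟨h1, h4⟩)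
  have h00 : Q 0 0 := d2 _ (by omega) hj₀ (d1 _ _ hi₀ hj₀ h0)
  have u1 : ∀ j, j + 1 < m → Q 0 j := by
    intro j
    induction j with
    | zero => intro _; exact h00
    | succ j ih =>
      intro hj
      obtain ⟨h1, h2, h3, h4⟩ := ih (by omega)
      exact H _ _ (by omega) hj (Or.inr (Or.inr (Or.inr ⟨h3, h2⟩)))
  have u2 : ∀ i j, i + 1 < n → j + 1 < m → Q i j := by
    intro i j
    induction i with
    | zero => intro _ hj; exact u1 j hj
    | succ i ih =>
      intro hi hj
      obtain ⟨h1, h2, h3, h4⟩ := ih (by omega) hj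
      exact H _ _ hi hj (Or.inl ⟨h4, h3⟩)
  intro i j hi hj
  rcases i with _ | i
  · rcases j with _ | j
    · exact h00.1
    · exact (u2 0 j (by omega) hj).2.1
  · rcases j with _ | j
    · exact (u2 i 0 hi (by omega)).2.2.2
    · exact (u2 i j hi hj).2.2.1

lemma whirl_prop (n m : ℕ) (hn : 2 ≤ n) (hm : 2 ≤ m) (S : Fin n × Fin m → Prop)
    (H : ∀ p q r s, whirlpoolAdj n m p q → whirlpoolAdj n m q r → whirlpoolAdj n m r s →
      whirlpoolAdj n m s p → S p → S q → S r ∧ S s)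
    (p q : Fin n × Fin m) (hpq : whirlpoolAdj n m p q) (hp : S p) (hq : S q) : ∀ x, S x := by
  let T : ℕ → ℕ → Prop := fun i j => ∃ (hi : i < n) (hj : j < m), S (⟨i, hi⟩, ⟨j, hj⟩)
  have HT : ∀ i j, i + 1 < n → j + 1 < m →
      (T i j ∧ T i (j + 1)) ∨ (T i (j + 1) ∧ T (i + 1) (j + 1)) ∨
      (T (i + 1) (j + 1) ∧ T (i + 1) j) ∨ (T (i + 1) j ∧ T i j) →
      T i j ∧ T i (j + 1) ∧ T (i + 1) (j + 1) ∧ T (i + 1) j := by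
    intro i j hi hj h
    have hi' : i < n := by omega
    have hj' : j < m := by omega
    simp only [T, hi, hj, hi', hj', exists_true_left] at h ⊢
    rcases whirl_sq n m i j hi hj with ⟨h1, h2, h3, h4⟩ | ⟨h1, h2, h3, h4⟩
    · rcases h with ⟨x, y⟩ | ⟨x, y⟩ | ⟨x, y⟩ | ⟨x, y⟩
      · have := H _ _ _ _ h1 h2 h3 h4 x y; tauto
      · have := H _ _ _ _ h2 h3 h4 h1 x y; tauto
      · have := H _ _ _ _ h3 h4 h1 h2 x y; tauto
      · have := H _ _ _ _ h4 h1 h2 h3 x y; tauto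
    · rcases h with ⟨x, y⟩ | ⟨x, y⟩ | ⟨x, y⟩ | ⟨x, y⟩
      · have := H _ _ _ _ h1 h4 h3 h2 y x; tauto
      · have := H _ _ _ _ h2 h1 h4 h3 y x; tauto
      · have := H _ _ _ _ h3 h2 h1 h4 y x; tauto
      · have := H _ _ _ _ h4 h3 h2 h1 y x; tauto
  have key : ∀ i j, i < n → j < m → T i j := by
    obtain ⟨⟨a, ha⟩, ⟨b, hb⟩⟩ := p
    obtain ⟨⟨c, hc⟩, ⟨d, hd⟩⟩ := q
    have tp : T a b := ⟨ha, hb, hp⟩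
    have tq : T c d := ⟨hc, hd, hq⟩
    -- horizontal and vertical edges
    have hor : ∀ i j, i < n → j + 1 < m → T i j → T i (j + 1) →
        ∀ i j, i < n → j < m → T i j := by
      intro i j hi hj h1 h2
      by_cases hi' : i + 1 < n
      · exact grid_prop n m T HT i j hi' hj (Or.inl ⟨h1, h2⟩)
      · obtain ⟨i, rfl⟩ : ∃ k, i = k + 1 := ⟨i - 1, by omega⟩
        exact grid_prop n m T HT i j hi hj (Or.inr (Or.inr (Or.inl ⟨h2, h1⟩)))
    have ver : ∀ i j, i + 1 < n → j < m → T i j → T (i + 1) j →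
        ∀ i j, i < n → j < m → T i j := by
      intro i j hi hj h1 h2
      by_cases hj' : j + 1 < m
      · exact grid_prop n m T HT i j hi hj' (Or.inr (Or.inr (Or.inr ⟨h2, h1⟩)))
      · obtain ⟨j, rfl⟩ : ∃ k, j = k + 1 := ⟨j - 1, by omega⟩
        exact grid_prop n m T HT i j hi hj (Or.inr (Or.inl ⟨h1, h2⟩))
    simp only [whirlpoolAdj, Fin.mk.injEq] at hpq
    rcases hpq with ⟨rfl, ⟨rfl, -⟩ | ⟨rfl, -⟩⟩ | ⟨rfl, ⟨rfl, -⟩ | ⟨rfl, -⟩⟩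
    · exact hor _ _ ha hd tp tq
    · exact hor _ _ ha hb tq tp
    · exact ver _ _ ha hb tq tp
    · exact ver _ _ hc hb tp tq
  rintro ⟨⟨i, hi⟩, ⟨j, hj⟩⟩
  obtain ⟨_, _, h⟩ := key i j hi hj
  exact h

lemma dirReachable_trans {V : Type*} {A : V → V → Prop} {u v w : V}
    (h1 : DirReachable A u v) (h2 : DirReachable A v w) : DirReachable A u w := by
  obtain ⟨k, f, f0, fk, hf⟩ := h1
  obtain ⟨l, g, g0, gl, hg⟩ := h2
  refine ⟨k + l, fun i => if i ≤ k then f i else g (i - k), by simp [f0], ?_, ?_⟩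
  · by_cases hl : l = 0
    · subst hl; simp [fk, ← gl, g0]
    · have : ¬ (k + l ≤ k) := by omega
      simp [this, gl, hl]
  · intro i hi
    rcases lt_trichotomy i k with h | h | h
    · simp only [h.le, if_true, Nat.succ_le_of_lt h]
      exact hf i h
    · subst h
      have := hg 0 (by omega)
      simp only [le_refl, if_true, fk]
      simpa [g0] using this
    · have e : i + 1 - k = i - k + 1 := by omega
      simp only [not_le.mpr h, if_false, not_le.mpr (Nat.lt_succ_of_lt h), e]
      exact hg _ (by omega)

lemma dirReachable_arc {V : Type*} {A : V → V → Prop} {u v : V}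
    (h : A u v) : DirReachable A u v :=
  ⟨1, fun i => if i = 0 then u else v, by simp, by simp, by
    intro i hi
    obtain rfl : i = 0 := by omega
    simpa using h⟩

lemma whirl_cycle (n m : ℕ) (hn : 2 ≤ n) (hm : 2 ≤ m) (p : Fin n × Fin m) :
    ∃ q r s, whirlpoolAdj n m p q ∧ whirlpoolAdj n m q r ∧ whirlpoolAdj n m r s ∧
      whirlpoolAdj n m s p := by
  obtain ⟨⟨a, ha⟩, ⟨b, hb⟩⟩ := p
  by_cases ha' : a + 1 < n
  · by_cases hb' : b + 1 < m
    · rcases whirl_sq n m a b ha' hb' with ⟨h1, h2, h3, h4⟩ | ⟨h1, h2, h3, h4⟩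
      · exact ⟨_, _, _, h1, h2, h3, h4⟩
      · exact ⟨_, _, _, h4, h3, h2, h1⟩
    · obtain ⟨b, rfl⟩ : ∃ k, b = k + 1 := ⟨b - 1, by omega⟩
      rcases whirl_sq n m a b ha' hb with ⟨h1, h2, h3, h4⟩ | ⟨h1, h2, h3, h4⟩
      · exact ⟨_, _, _, h2, h3, h4, h1⟩
      · exact ⟨_, _, _, h1, h4, h3, h2⟩
  · obtain ⟨a, rfl⟩ : ∃ k, a = k + 1 := ⟨a - 1, by omega⟩
    by_cases hb' : b + 1 < m
    · rcases whirl_sq n m a b ha hb' with ⟨h1, h2, h3, h4⟩ | ⟨h1, h2, h3, h4⟩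
      · exact ⟨_, _, _, h4, h1, h2, h3⟩
      · exact ⟨_, _, _, h3, h2, h1, h4⟩
    · obtain ⟨b, rfl⟩ : ∃ k, b = k + 1 := ⟨b - 1, by omega⟩
      rcases whirl_sq n m a b ha hb with ⟨h1, h2, h3, h4⟩ | ⟨h1, h2, h3, h4⟩
      · exact ⟨_, _, _, h3, h4, h1, h2⟩
      · exact ⟨_, _, _, h2, h1, h4, h3⟩

lemma whirl_strong (n m : ℕ) (hn : 2 ≤ n) (hm : 2 ≤ m) :
    StrongConnected (whirlpoolAdj n m) := by
  intro u
  obtain ⟨q, r, s, h1, -, -, -⟩ := whirl_cycle n m hn hm u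
  refine whirl_prop n m hn hm (fun v => DirReachable (whirlpoolAdj n m) u v) ?_ u q h1 ?_ ?_
  · intro p q r s _ h2 h3 _ _ hq
    have := dirReachable_trans hq (dirReachable_arc h2)
    exact ⟨this, dirReachable_trans this (dirReachable_arc h3)⟩
  · exact ⟨0, fun _ => u, rfl, rfl, by simp⟩
  · exact dirReachable_arc h1

lemma whirl_parity (n m : ℕ) (p q : Fin n × Fin m) (h : whirlpoolAdj n m p q) :
    (p.1.val + p.2.val) % 2 ≠ (q.1.val + q.2.val) % 2 := by
  simp only [whirlpoolAdj, Fin.ext_iff] at h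
  omega

lemma whirl_asymm (n m : ℕ) (p q : Fin n × Fin m) (h : whirlpoolAdj n m p q) :
    ¬ whirlpoolAdj n m q p := by
  simp only [whirlpoolAdj, Fin.ext_iff] at h ⊢
  omega

lemma whirl_orient (n m : ℕ) : IsOrientation (gridGraph n m) (whirlpoolAdj n m) := by
  refine ⟨?_, ?_, whirl_asymm n m⟩
  · intro x y h
    simp only [gridGraph, SimpleGraph.boxProd_adj, SimpleGraph.pathGraph_adj]
    simp only [whirlpoolAdj, Fin.ext_iff] at h ⊢
    omega
  · intro x y h
    simp only [gridGraph, SimpleGraph.boxProd_adj, SimpleGraph.pathGraph_adj] at h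
    simp only [whirlpoolAdj, Fin.ext_iff] at h ⊢
    rcases h with ⟨h | h, e⟩ | ⟨h | h, e⟩
    · by_cases c : x.1.val % 2 = x.2.val % 2
      · exact Or.inr (Or.inr ⟨e.symm, Or.inl ⟨h.symm, by omega⟩⟩)
      · exact Or.inl (Or.inr ⟨e, Or.inr ⟨h.symm, c⟩⟩)
    · by_cases c : y.1.val % 2 = y.2.val % 2
      · exact Or.inl (Or.inr ⟨e, Or.inl ⟨h.symm, by omega⟩⟩)
      · exact Or.inr (Or.inr ⟨e.symm, Or.inr ⟨h.symm, c⟩⟩)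
    · by_cases c : x.1.val % 2 = x.2.val % 2
      · exact Or.inl (Or.inl ⟨e, Or.inl ⟨h.symm, c⟩⟩)
      · exact Or.inr (Or.inl ⟨e.symm, Or.inr ⟨h.symm, by omega⟩⟩)
    · by_cases c : y.1.val % 2 = y.2.val % 2
      · exact Or.inr (Or.inl ⟨e.symm, Or.inl ⟨h.symm, c⟩⟩)
      · exact Or.inl (Or.inl ⟨e, Or.inr ⟨h.symm, by omega⟩⟩)

lemma whirl_convex (n m : ℕ) (hn : 2 ≤ n) (hm : 2 ≤ m) (C : Set (Fin n × Fin m))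
    (hC : DConvex (whirlpoolAdj n m) C) (u v : Fin n × Fin m) (hu : u ∈ C) (hv : v ∈ C)
    (huv : u ≠ v) : C = Set.univ := by
  classical
  have hr : ∃ k, ∃ f, IsDirWalk (whirlpoolAdj n m) k f u v := whirl_strong n m hn hm u v
  obtain ⟨f, hf⟩ := Nat.find_spec hr
  have hg : IsGeodesic (whirlpoolAdj n m) (Nat.find hr) f u v :=
    ⟨hf, fun k' f' h' => Nat.find_min' hr ⟨f', h'⟩⟩
  have hpos : 0 < Nat.find hr := by
    rcases Nat.eq_zero_or_pos (Nat.find hr) with h | h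
    · exfalso
      obtain ⟨f0, fk, -⟩ := hf
      rw [h] at fk
      exact huv (f0.symm.trans fk)
    · exact h
  have h1 : f 1 ∈ C := hC.2 u hu v hv _ f hg 1 hpos
  have harc : whirlpoolAdj n m u (f 1) := by
    have := hf.2.2 0 hpos
    rwa [hf.1] at this
  refine Set.eq_univ_of_forall (whirl_prop n m hn hm (· ∈ C) ?_ u (f 1) harc hu h1)
  intro p q r s h1 h2 h3 h4 hp hq
  let g : ℕ → Fin n × Fin m := fun i => if i = 0 then q else if i = 1 then r else
    if i = 2 then s else p
  have gw : IsDirWalk (whirlpoolAdj n m) 3 g q p := by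
    refine ⟨by simp [g], by simp [g], ?_⟩
    intro i hi
    interval_cases i <;> simp [g, h2, h3, h4]
  have gg : IsGeodesic (whirlpoolAdj n m) 3 g q p := by
    refine ⟨gw, ?_⟩
    rintro k' f' ⟨f0, fk, hf'⟩
    by_contra hk
    have hk' : k' < 3 := by omega
    have par := whirl_parity n m p q h1
    interval_cases k'
    · rw [f0] at fk
      exact par (by rw [fk])
    · have := hf' 0 (by omega)
      rw [f0, fk] at this
      exact whirl_asymm n m _ _ h1 this
    · have e1 := whirl_parity n m _ _ (hf' 0 (by omega))
      have e2 := whirl_parity n m _ _ (hf' 1 (by omega))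
      simp only [f0, fk, Nat.zero_add, Nat.reduceAdd] at e1 e2
      omega
  exact ⟨by simpa [g] using hC.2 q hq p hp 3 g gg 1 (by omega),
    by simpa [g] using hC.2 q hq p hp 3 g gg 2 (by omega)⟩

lemma whirl_con (n m : ℕ) (hn : 2 ≤ n) (hm : 2 ≤ m) :
    convexityNumber (whirlpoolAdj n m) = 1 := by
  have hset : {k | ∃ C : Set (Fin n × Fin m), DConvex (whirlpoolAdj n m) C ∧ C ≠ Set.univ ∧
      C.ncard = k} = {1} := by
    ext k
    simp only [Set.mem_ofPred_eq, Set.mem_singleton_iff]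
    constructor
    · rintro ⟨C, hC, hne, rfl⟩
      obtain ⟨x, hx⟩ := hC.1
      rw [Set.ncard_eq_one]
      refine ⟨x, Set.eq_singleton_iff_unique_mem.mpr ⟨hx, fun y hy => ?_⟩⟩
      by_contra hxy
      exact hne (whirl_convex n m hn hm C hC y x hy hx hxy)
    · rintro rfl
      let a : Fin n × Fin m := (⟨0, by omega⟩, ⟨0, by omega⟩)
      let b : Fin n × Fin m := (⟨1, by omega⟩, ⟨0, by omega⟩)
      refine ⟨{a}, ⟨⟨a, rfl⟩, ?_⟩, ?_, Set.ncard_singleton a⟩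
      · rintro u rfl v rfl k f ⟨⟨f0, _, _⟩, hmin⟩ i hi
        have := hmin 0 (fun _ => a) ⟨rfl, rfl, by simp⟩
        obtain rfl : i = 0 := by omega
        exact f0
      · intro h
        have hb : b ∈ ({a} : Set (Fin n × Fin m)) := h ▸ Set.mem_univ b
        simp [a, b] at hb
  unfold convexityNumber
  rw [hset]
  exact csSup_singleton 1

/-- The whirlpool orientation of a grid is a strongly connected orientation with
convexity number `1`. -/
theorem whirlpool_strong_and_convexityNumber_one (n m : ℕ) (hn : 2 ≤ n) (hm : 2 ≤ m) :
    IsOrientation (gridGraph n m) (whirlpoolAdj n m) ∧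
    StrongConnected (whirlpoolAdj n m) ∧
    convexityNumber (whirlpoolAdj n m) = 1 := by
  exact ⟨whirl_orient n m, whirl_strong n m hn hm, whirl_con n m hn hm⟩
end

section
/- For every pair of integers n, m ≥ 2, the grid G = P_n □ P_m satisfies 1 ∈ S_SC(G); that is, there exists a strongly connected orientation D of G with con(D) = 1. -/
/-!  Common definitions: oriented graphs, geodesic convexity, convexity number,
strong convexity spectrum, and grid graphs. -/

variable {V : Type*}

/-- Horizontal adjacency. -/
def GH {n m : ℕ} (x y : Fin n × Fin m) : Prop :=
  x.1 = y.1 ∧ (x.2.val + 1 = y.2.val ∨ y.2.val + 1 = x.2.val)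

/-- Vertical adjacency. -/
def GV {n m : ℕ} (x y : Fin n × Fin m) : Prop :=
  x.2 = y.2 ∧ (x.1.val + 1 = y.1.val ∨ y.1.val + 1 = x.1.val)

/-- The orientation in which every unit square is a directed 4-cycle. -/
def GA {n m : ℕ} (x y : Fin n × Fin m) : Prop :=
  ((x.1.val + x.2.val) % 2 = 0 ∧ GH x y) ∨ ((x.1.val + x.2.val) % 2 = 1 ∧ GV x y)

theorem grid_adj_iff {n m : ℕ} (x y : Fin n × Fin m) :
    (gridGraph n m).Adj x y ↔ GH x y ∨ GV x y := by
  unfold gridGraph GH GV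
  rw [SimpleGraph.boxProd_adj, SimpleGraph.pathGraph_adj, SimpleGraph.pathGraph_adj]
  tauto

theorem GA_parity {n m : ℕ} {x y : Fin n × Fin m} (h : GA x y) :
    (x.1.val + x.2.val) % 2 + (y.1.val + y.2.val) % 2 = 1 := by
  unfold GA GH GV at h
  simp only [Fin.ext_iff] at h
  omega

theorem GA_orientation (n m : ℕ) : IsOrientation (gridGraph n m) GA := by
  refine ⟨?_, ?_, ?_⟩
  · intro x y h
    rw [grid_adj_iff]
    unfold GA at h
    tauto
  · intro x y h
    rw [grid_adj_iff] at h
    unfold GA GH GV at *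
    simp only [Fin.ext_iff, true_and] at *
    omega
  · intro x y h h'
    unfold GA GH GV at *
    simp only [Fin.ext_iff, true_and] at *
    omega

theorem grid_connected (n m : ℕ) (hn : 2 ≤ n) (hm : 2 ≤ m) : (gridGraph n m).Connected := by
  obtain ⟨n, rfl⟩ : ∃ k, n = k + 1 := ⟨n - 1, by omega⟩
  obtain ⟨m, rfl⟩ : ∃ k, m = k + 1 := ⟨m - 1, by omega⟩
  exact (SimpleGraph.pathGraph_connected n).boxProd (SimpleGraph.pathGraph_connected m)

theorem exists_step (n : ℕ) (hn : 2 ≤ n) (a : Fin n) :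
    ∃ b : Fin n, a.val + 1 = b.val ∨ b.val + 1 = a.val := by
  by_cases h : a.val + 1 < n
  · exact ⟨⟨a.val + 1, h⟩, Or.inl rfl⟩
  · exact ⟨⟨a.val - 1, by omega⟩, Or.inr (by simp only; omega)⟩

/-- Four arcs around a square. -/
def Cyc {n m : ℕ} (x y z w : Fin n × Fin m) : Prop := GA x y ∧ GA y z ∧ GA z w ∧ GA w x

theorem Cyc.rot {n m : ℕ} {x y z w : Fin n × Fin m} (h : Cyc x y z w) : Cyc y z w x :=
  ⟨h.2.1, h.2.2.1, h.2.2.2, h.1⟩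

theorem square {n m : ℕ} {v u w : Fin n × Fin m} (hu : GH v u) (hw : GV v w) :
    Cyc v u (w.1, u.2) w ∨ Cyc v w (w.1, u.2) u := by
  rcases Nat.mod_two_eq_zero_or_one (v.1.val + v.2.val) with hp | hp
  · left
    unfold Cyc GA GH GV at *
    simp only [Fin.ext_iff, true_and] at *
    refine ⟨?_, ?_, ?_, ?_⟩ <;> omega
  · right
    unfold Cyc GA GH GV at *
    simp only [Fin.ext_iff, true_and] at *
    refine ⟨?_, ?_, ?_, ?_⟩ <;> omega

theorem edge_cyc {n m : ℕ} (hn : 2 ≤ n) (hm : 2 ≤ m) {x y : Fin n × Fin m}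
    (h : GA x y) : ∃ z w, Cyc x y z w := by
  have hA := GA_orientation n m
  rcases h.imp And.right And.right with h1 | h1
  · obtain ⟨b, hb⟩ := exists_step n hn x.1
    have hv : GV x (b, x.2) := ⟨rfl, hb⟩
    rcases square h1 hv with h2 | h2
    · exact ⟨_, _, h2⟩
    · exact absurd h2.2.2.2 (hA.2.2 _ _ h)
  · obtain ⟨b, hb⟩ := exists_step m hm x.2
    have hv : GH x (x.1, b) := ⟨rfl, hb⟩
    rcases square hv h1 with h2 | h2
    · exact absurd h2.2.2.2 (hA.2.2 _ _ h)
    · exact ⟨_, _, h2⟩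

theorem DirReachable.refl' {A : V → V → Prop} (u : V) : DirReachable A u u :=
  ⟨0, fun _ => u, rfl, rfl, fun i hi => absurd hi (Nat.not_lt_zero i)⟩

theorem DirReachable.cons' {A : V → V → Prop} {u v w : V} (h : A u v)
    (hr : DirReachable A v w) : DirReachable A u w := by
  obtain ⟨k, f, h0, hk, hs⟩ := hr
  refine ⟨k + 1, fun i => Nat.casesOn i u f, rfl, hk, ?_⟩
  intro i hi
  cases i with
  | zero => simpa [h0] using h
  | succ i => exact hs i (by omega)

theorem GA_strong (n m : ℕ) (hn : 2 ≤ n) (hm : 2 ≤ m) :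
    StrongConnected (GA : Fin n × Fin m → Fin n × Fin m → Prop) := by
  intro u v
  have hA := GA_orientation n m
  obtain ⟨p⟩ := (grid_connected n m hn hm).preconnected u v
  induction p with
  | nil => exact DirReachable.refl' _
  | cons h p ih =>
    rcases hA.2.1 _ _ h with h1 | h1
    · exact DirReachable.cons' h1 ih
    · obtain ⟨z, w, hc⟩ := edge_cyc hn hm h1
      exact DirReachable.cons' hc.2.1 (DirReachable.cons' hc.2.2.1 (DirReachable.cons' hc.2.2.2 ih))

theorem cyc_mem {n m : ℕ} {C : Set (Fin n × Fin m)} (hC : DConvex GA C)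
    {x y z w : Fin n × Fin m} (h : Cyc x y z w) (hx : x ∈ C) (hy : y ∈ C) :
    z ∈ C ∧ w ∈ C := by
  have hA := GA_orientation n m
  obtain ⟨h1, h2, h3, h4⟩ := h
  let f : ℕ → Fin n × Fin m := fun i => match i with
    | 0 => y
    | 1 => z
    | 2 => w
    | _ => x
  have hg : IsGeodesic GA 3 f y x := by
    refine ⟨⟨rfl, rfl, ?_⟩, ?_⟩
    · intro i hi
      interval_cases i
      · exact h2
      · exact h3
      · exact h4
    · rintro k g ⟨g0, gk, gs⟩
      by_contra hk
      have hk : k < 3 := by omega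
      have hp := GA_parity h1
      interval_cases k
      · rw [← g0, ← gk] at hp
        omega
      · have := gs 0 (by omega)
        rw [g0, gk] at this
        exact hA.2.2 _ _ h1 this
      · have q1 := GA_parity (gs 0 (by omega))
        have q2 := GA_parity (gs 1 (by omega))
        simp only [zero_add, Nat.reduceAdd] at q1 q2
        rw [g0] at q1
        rw [gk] at q2
        omega
  exact ⟨hC.2 y hy x hx 3 f hg 1 (by omega), hC.2 y hy x hx 3 f hg 2 (by omega)⟩

theorem perp1 {n m : ℕ} {C : Set (Fin n × Fin m)} (hC : DConvex GA C)
    {v u w : Fin n × Fin m} (hu : GH v u) (hw : GV v w) (hv : v ∈ C) (huC : u ∈ C) : w ∈ C := by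
  rcases square hu hw with h | h
  · exact (cyc_mem hC h hv huC).2
  · exact (cyc_mem hC h.rot.rot.rot huC hv).1

theorem perp2 {n m : ℕ} {C : Set (Fin n × Fin m)} (hC : DConvex GA C)
    {v u w : Fin n × Fin m} (hu : GH v u) (hw : GV v w) (hv : v ∈ C) (hwC : w ∈ C) : u ∈ C := by
  rcases square hu hw with h | h
  · exact (cyc_mem hC h.rot.rot.rot hwC hv).1
  · exact (cyc_mem hC h hv hwC).2

theorem nbrs_mem {n m : ℕ} (hn : 2 ≤ n) (hm : 2 ≤ m) {C : Set (Fin n × Fin m)}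
    (hC : DConvex GA C) {v u w : Fin n × Fin m} (hv : v ∈ C) (hu : u ∈ C)
    (h1 : (gridGraph n m).Adj v u) (h2 : (gridGraph n m).Adj v w) : w ∈ C := by
  rw [grid_adj_iff] at h1 h2
  obtain ⟨a, ha⟩ := exists_step n hn v.1
  obtain ⟨b, hb⟩ := exists_step m hm v.2
  have hva : GV v (a, v.2) := ⟨rfl, ha⟩
  have hvb : GH v (v.1, b) := ⟨rfl, hb⟩
  rcases h1 with h1 | h1 <;> rcases h2 with h2 | h2
  · exact perp2 hC h2 hva hv (perp1 hC h1 hva hv hu)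
  · exact perp1 hC h1 h2 hv hu
  · exact perp2 hC h2 h1 hv hu
  · exact perp1 hC hvb h2 hv (perp2 hC hvb h1 hv hu)

theorem all_mem {n m : ℕ} (hn : 2 ≤ n) (hm : 2 ≤ m) {C : Set (Fin n × Fin m)}
    (hC : DConvex GA C) {x y : Fin n × Fin m} (hx : x ∈ C) (hy : y ∈ C)
    (h : (gridGraph n m).Adj x y) : C = Set.univ := by
  rw [Set.eq_univ_iff_forall]
  intro t
  obtain ⟨p⟩ := (grid_connected n m hn hm).preconnected x t
  induction p generalizing y with
  | nil => exact hx
  | cons h' p ih => exact ih (nbrs_mem hn hm hC hx hy h h') hx h'.symm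

theorem GA_convex_card {n m : ℕ} (hn : 2 ≤ n) (hm : 2 ≤ m) {C : Set (Fin n × Fin m)}
    (hC : DConvex GA C) (hne : C ≠ Set.univ) : C.ncard = 1 := by
  classical
  obtain ⟨x, hx⟩ := hC.1
  rw [Set.ncard_eq_one]
  refine ⟨x, Set.eq_singleton_iff_unique_mem.2 ⟨hx, ?_⟩⟩
  intro y hy
  by_contra hxy
  have hr : ∃ k f, IsDirWalk GA k f x y := GA_strong n m hn hm x y
  obtain ⟨f, hf⟩ := Nat.find_spec hr
  have hg : IsGeodesic GA (Nat.find hr) f x y :=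
    ⟨hf, fun k' f' h' => Nat.find_min' hr ⟨f', h'⟩⟩
  generalize Nat.find hr = k at hf hg
  obtain ⟨f0, fk, fs⟩ := hf
  rcases Nat.eq_zero_or_pos k with rfl | hk
  · exact hxy (fk.symm.trans f0)
  · have a := fs 0 hk
    rw [f0] at a
    exact hne (all_mem hn hm hC hx (hC.2 x hx y hy k f hg 1 hk) ((GA_orientation n m).1 _ _ a))

/-- Every grid has a strongly connected orientation with convexity number `1`. -/
theorem one_mem_strongConvexitySpectrum_grid (n m : ℕ) (hn : 2 ≤ n) (hm : 2 ≤ m) :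
    1 ∈ strongConvexitySpectrum (gridGraph n m) := by
  refine ⟨GA, GA_orientation n m, GA_strong n m hn hm, ?_⟩
  have hs : {k | ∃ C : Set (Fin n × Fin m), DConvex GA C ∧ C ≠ Set.univ ∧ C.ncard = k} = {1} := by
    ext k
    simp only [Set.mem_ofPred_eq, Set.mem_singleton_iff]
    constructor
    · rintro ⟨C, hC, hne, rfl⟩
      exact GA_convex_card hn hm hC hne
    · rintro rfl
      let x : Fin n × Fin m := (⟨0, by omega⟩, ⟨0, by omega⟩)
      refine ⟨{x}, ⟨⟨x, rfl⟩, ?_⟩, ?_, Set.ncard_singleton x⟩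
      · rintro u hu v hv k f ⟨⟨h0, _⟩, hmin⟩ i hi
        have hu : u = x := hu
        have hv : v = x := hv
        have := hmin 0 (fun _ => u) ⟨rfl, hu.trans hv.symm, fun i hi => absurd hi (Nat.not_lt_zero i)⟩
        obtain rfl : i = 0 := by omega
        exact h0.trans hu
      · intro h
        have : ((⟨1, by omega⟩, ⟨0, by omega⟩) : Fin n × Fin m) ∈ ({x} : Set (Fin n × Fin m)) := by
          rw [h]; trivial
        simp [x] at this
  unfold convexityNumber
  rw [hs]
  exact csSup_singleton 1
end

section
/- Let n, m ≥ 2 be integers and let G = P_n □ P_m be the grid, which has nm vertices. Then 2 ∉ S_SC(G), 3 ∉ S_SC(G), 5 ∉ S_SC(G) and nm−1 ∉ S_SC(G). Moreover, for every i ∈ {3, 4, 5, 6}, if n ≥ i and m ≥ i, then nm−(i−1) ∉ S_SC(G). -/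
/-!  Common definitions: oriented graphs, geodesic convexity, convexity number,
strong convexity spectrum, and grid graphs. -/

variable {V : Type*}

namespace GridConv

abbrev Cell := ℕ × ℕ

inductive Mv where
  | none
  | left
  | bot
  | stat (c : Cell)
  | typ (c : Cell)
  | arc (a b : Cell)


noncomputable def anyR {α : Type} (l : List α) (f : α → Bool) : Bool :=
  List.rec false (fun a _ ih => f a || ih) l
noncomputable def allR {α : Type} (l : List α) (f : α → Bool) : Bool :=
  List.rec true (fun a _ ih => f a && ih) l
noncomputable def firstM {α : Type} (l : List α) (f : α → Mv) : Mv :=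
  List.rec Mv.none (fun a _ ih => Mv.rec ih .left .bot .stat .typ .arc (f a)) l


def ceq (a b : Cell) : Bool := Nat.beq a.1 b.1 && Nat.beq a.2 b.2

def cadj (a b : Cell) : Bool :=
  (Nat.beq a.1 b.1 && (Nat.beq (a.2 + 1) b.2 || Nat.beq (b.2 + 1) a.2)) ||
  (Nat.beq a.2 b.2 && (Nat.beq (a.1 + 1) b.1 || Nat.beq (b.1 + 1) a.1))

def nb (a : Cell) : List Cell :=
  [(a.1 + 1, a.2), (a.1, a.2 + 1), (a.1 - 1, a.2), (a.1, a.2 - 1)]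

/-- Search state: cells of `T` with a type (0 unknown, 1 entered from outside,
2 left to the outside, 3 no outside neighbour), cells outside `T`, known arcs inside `T`,
and partial knowledge of the left and bottom sides of the quadrant. -/
structure St where
  T : List (Cell × ℕ)
  S : List Cell
  R : List (Cell × Cell)
  L : ℕ
  le : Bool
  B : ℕ
  be : Bool

noncomputable def memT (s : St) (c : Cell) : Bool := anyR s.T fun t => ceq t.1 c
noncomputable def memS (s : St) (c : Cell) : Bool := anyR s.S fun t => ceq t c
noncomputable def memR (s : St) (a b : Cell) : Bool := anyR s.R fun t => ceq t.1 a && ceq t.2 b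
noncomputable def isOut (s : St) (c : Cell) : Bool :=
  (s.le && Nat.blt c.1 s.L) || (s.be && Nat.blt c.2 s.B)
noncomputable def isIn (s : St) (c : Cell) : Bool := Nat.ble s.L c.1 && Nat.ble s.B c.2
noncomputable def pos (c : Cell) : Bool := Nat.ble 1 c.1 && Nat.ble 1 c.2

noncomputable def btw (a b c : ℕ) : Bool := (Nat.blt a b && Nat.blt b c) || (Nat.blt c b && Nat.blt b a)

noncomputable def badEnd (s : St) (u w : Cell) (k : ℕ) : Bool :=
  let d := (u.1 - w.1) + (w.1 - u.1) + ((u.2 - w.2) + (w.2 - u.2))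
  Nat.ble k d || (Nat.beq (d + 1) k &&
    ((Nat.beq u.1 w.1 && anyR s.T fun t => Nat.beq t.1.1 u.1 && btw u.2 t.1.2 w.2) ||
     (Nat.beq u.2 w.2 && anyR s.T fun t => Nat.beq t.1.2 u.2 && btw u.1 t.1.1 w.1)))


noncomputable def walkBad (s : St) (u : Cell) (f : ℕ) : ℕ → Cell → Bool :=
  Nat.rec (fun _ _ => false) (fun _ ih k t =>
    ((anyR s.T fun t' => ceq t'.1 t && Nat.beq t'.2 2) &&
      anyR s.S fun w => cadj t w && badEnd s u w k) ||
    anyR s.R fun r => ceq r.1 t && ih (k + 1) r.2) f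

noncomputable def cellBad (s : St) (t : Cell × ℕ) : Bool :=
  (Nat.beq t.2 3 && anyR s.S fun u => cadj u t.1) ||
  (pos t.1 && (
    ((Nat.beq t.2 1 || Nat.beq t.2 2) && allR (nb t.1) fun n => memT s n || isOut s n) ||
    (allR (nb t.1) fun n => memR s n t.1 || isOut s n || (Nat.beq t.2 1 && memS s n)) ||
    (allR (nb t.1) fun n => memR s t.1 n || isOut s n || (Nat.beq t.2 2 && memS s n))))

noncomputable def closed (s : St) : Bool :=
  Nat.blt 5 s.T.length || anyR s.T (cellBad s) || anyR s.T fun t => Nat.beq t.2 1 && anyR s.S fun u => cadj u t.1 && walkBad s u 5 1 t.1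

noncomputable def final (s : St) : Bool :=
  allR s.T fun t => (Nat.beq t.2 1 || Nat.beq t.2 3) && pos t.1 &&
    allR (nb t.1) fun n => memT s n || memS s n || isOut s n

noncomputable def nextStat (s : St) (t : Cell) : Mv :=
  firstM (nb t) fun n => cond (memT s n || memS s n || isOut s n) .none <|
        cond (isIn s n) (.stat n) <| cond (Nat.blt n.1 s.L) .left .bot

noncomputable def next (s : St) : Mv :=
  Mv.rec (firstM s.T fun t =>
    Mv.rec (cond (Nat.beq t.2 0) (.typ t.1) <|
        firstM (nb t.1) fun n => cond (memT s n && !(memR s n t.1 || memR s t.1 n)) (.arc t.1 n) .none)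
      .left .bot .stat .typ .arc
    (nextStat s t.1)) .left .bot .stat .typ .arc
    (firstM s.T fun t => cond (Nat.beq t.2 0) .none (nextStat s t.1))

noncomputable def setTy (c : Cell) (y : ℕ) (l : List (Cell × ℕ)) : List (Cell × ℕ) :=
  List.rec [] (fun t _ ih => (t.1, cond (ceq t.1 c) y t.2) :: ih) l

noncomputable def fN (n : ℕ) (k : ℕ → Bool) : Bool := Nat.rec (k 0) (fun m _ => k (m + 1)) n
noncomputable def fC (c : Cell) (k : Cell → Bool) : Bool := Prod.rec (fun a b => fN a fun x => fN b fun y => k (x, y)) c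
noncomputable def search (f : ℕ) : St → Bool :=
  Nat.rec (fun _ => false) (fun _ ih s => closed s ||
    Mv.rec (final s)
     (Nat.ble 1 s.L && ih { s with L := s.L - 1 } && ih { s with le := true })
     (Nat.ble 1 s.B && ih { s with B := s.B - 1 } && ih { s with be := true })
     (fun c => fC c fun c => isIn s c && !memT s c && ih { s with S := c :: s.S } &&
        ih { s with T := (c, 0) :: s.T })
     (fun c => ih { s with T := setTy c 1 s.T } && ih { s with T := setTy c 2 s.T } &&
        ih { s with T := setTy c 3 s.T })
     (fun a b => cadj a b && memT s a && memT s b &&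
        ih { s with R := (a, b) :: s.R } && ih { s with R := (b, a) :: s.R })
    (next s)) f

noncomputable def start (b : Cell) (y : ℕ) : St :=
  { T := [((16, 16), 1), (b, y)], S := [], R := [((16, 16), b)],
    L := min 16 b.1, le := false, B := min 16 b.2, be := false }

/-! ### Real configurations in the quadrant -/

/-- Grid adjacency on the integer plane. -/
def Nb (p q : ℤ × ℤ) : Prop :=
  (p.1 = q.1 ∧ (p.2 + 1 = q.2 ∨ q.2 + 1 = p.2)) ∨ (p.2 = q.2 ∧ (p.1 + 1 = q.1 ∨ q.1 + 1 = p.1))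

/-- The first quadrant. -/
def Qd (p : ℤ × ℤ) : Prop := 0 ≤ p.1 ∧ 0 ≤ p.2

/-- A walk of length `k` from `u` to `t`, all of whose vertices except `u` lie in `T`. -/
inductive TW (T : Set (ℤ × ℤ)) (A : ℤ × ℤ → ℤ × ℤ → Prop) (u : ℤ × ℤ) : ℕ → ℤ × ℤ → Prop
  | base {t} : u ∉ T → t ∈ T → A u t → TW T A u 1 t
  | step {k t s} : TW T A u k t → A t s → s ∈ T → TW T A u (k + 1) s

/-- The distance between `u` and `w` is at most `k - 1`, and at most `k - 2` when `u` and `w` are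
on a line blocked by `T`. -/
def Near (T : Set (ℤ × ℤ)) (u w : ℤ × ℤ) (k : ℕ) : Prop :=
  (u.1 - w.1) + (u.2 - w.2) ≤ (k : ℤ) - 1 ∧ (u.1 - w.1) + (w.2 - u.2) ≤ (k : ℤ) - 1 ∧
  (w.1 - u.1) + (u.2 - w.2) ≤ (k : ℤ) - 1 ∧ (w.1 - u.1) + (w.2 - u.2) ≤ (k : ℤ) - 1 ∧
  (∀ c ∈ T, c.1 = u.1 → w.1 = u.1 → u.2 < c.2 → c.2 < w.2 → w.2 - u.2 ≤ (k : ℤ) - 2) ∧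
  (∀ c ∈ T, c.1 = u.1 → w.1 = u.1 → w.2 < c.2 → c.2 < u.2 → u.2 - w.2 ≤ (k : ℤ) - 2) ∧
  (∀ c ∈ T, c.2 = u.2 → w.2 = u.2 → u.1 < c.1 → c.1 < w.1 → w.1 - u.1 ≤ (k : ℤ) - 2) ∧
  (∀ c ∈ T, c.2 = u.2 → w.2 = u.2 → w.1 < c.1 → c.1 < u.1 → u.1 - w.1 ≤ (k : ℤ) - 2)

structure Cfg (T : Set (ℤ × ℤ)) (A : ℤ × ℤ → ℤ × ℤ → Prop) : Prop where
  quad : ∀ p ∈ T, Qd p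
  card : ∀ F : Finset (ℤ × ℤ), (∀ p ∈ F, p ∈ T) → F.card ≤ 5
  adj : ∀ p q, A p q → Nb p q ∧ Qd p ∧ Qd q
  tot : ∀ p q, p ∈ T → Qd q → Nb p q → A p q ∨ A q p
  asym : ∀ p q, A p q → ¬ A q p
  out : ∀ X : Set (ℤ × ℤ), X ⊆ T → X.Nonempty → ∃ x ∈ X, ∃ y, y ∉ X ∧ A x y
  inn : ∀ X : Set (ℤ × ℤ), X ⊆ T → X.Nonempty → ∃ x ∈ X, ∃ y, y ∉ X ∧ A y x
  walk : ∀ u k t w, TW T A u k t → A t w → w ∉ T → Near T u w k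

variable {T : Set (ℤ × ℤ)} {A : ℤ × ℤ → ℤ × ℤ → Prop}

def tyI (T : Set (ℤ × ℤ)) (A : ℤ × ℤ → ℤ × ℤ → Prop) (t : ℤ × ℤ) : Prop := ∃ u, u ∉ T ∧ A u t
def tyO (T : Set (ℤ × ℤ)) (A : ℤ × ℤ → ℤ × ℤ → Prop) (t : ℤ × ℤ) : Prop := ∃ u, u ∉ T ∧ A t u

theorem Nb.symm {p q : ℤ × ℤ} (h : Nb p q) : Nb q p := by unfold Nb at *; omega

theorem Cfg.inOut (h : Cfg T A) {t : ℤ × ℤ} (ht : t ∈ T) {u w : ℤ × ℤ} (hu : u ∉ T) (hw : w ∉ T)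
    (h1 : A u t) (h2 : A t w) : False := by
  have := h.walk u 1 t w (.base hu ht h1) h2 hw
  obtain ⟨a, b, c, d, -⟩ := this
  have : u = w := by ext <;> push_cast at * <;> omega
  subst this
  exact h.asym _ _ h1 h2

theorem Cfg.I_arc (h : Cfg T A) {t : ℤ × ℤ} (ht : t ∈ T) (hI : tyI T A t) {s : ℤ × ℤ} (hs : s ∉ T)
    (hq : Qd s) (hn : Nb t s) : A s t := by
  obtain ⟨u, hu, hut⟩ := hI
  rcases h.tot t s ht hq hn with h1 | h1
  · exact (h.inOut ht hu hs hut h1).elim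
  · exact h1

theorem Cfg.O_arc (h : Cfg T A) {t : ℤ × ℤ} (ht : t ∈ T) (hO : tyO T A t) {s : ℤ × ℤ} (hs : s ∉ T)
    (hq : Qd s) (hn : Nb t s) : A t s := by
  obtain ⟨u, hu, hut⟩ := hO
  rcases h.tot t s ht hq hn with h1 | h1
  · exact h1
  · exact (h.inOut ht hs hu h1 hut).elim

/-! ### Soundness of the search -/

def rho (a : ℤ × ℤ) (c : Cell) : ℤ × ℤ := (a.1 + c.1 - 16, a.2 + c.2 - 16)

def tyOk (T : Set (ℤ × ℤ)) (A : ℤ × ℤ → ℤ × ℤ → Prop) (t : ℤ × ℤ) (y : ℕ) : Prop :=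
  (y = 1 → tyI T A t) ∧ (y = 2 → tyO T A t) ∧ (y = 3 → ¬ tyI T A t ∧ ¬ tyO T A t)

structure Sat (T : Set (ℤ × ℤ)) (A : ℤ × ℤ → ℤ × ℤ → Prop) (a : ℤ × ℤ) (s : St) : Prop where
  nd : (s.T.map Prod.fst).Nodup
  mT : ∀ t ∈ s.T, rho a t.1 ∈ T ∧ tyOk T A (rho a t.1) t.2
  mS : ∀ c ∈ s.S, rho a c ∉ T ∧ Qd (rho a c)
  mR : ∀ r ∈ s.R, A (rho a r.1) (rho a r.2) ∧ rho a r.1 ∈ T ∧ rho a r.2 ∈ T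
  L : 0 ≤ a.1 + s.L - 16
  le : s.le = true → a.1 + s.L - 16 = 0
  B : 0 ≤ a.2 + s.B - 16
  be : s.be = true → a.2 + s.B - 16 = 0

theorem anyR_eq {α : Type} (l : List α) (f : α → Bool) : anyR l f = l.any f := by
  induction l with
  | nil => rfl
  | cons a l ih => rw [List.any_cons, ← ih]; rfl

theorem allR_eq {α : Type} (l : List α) (f : α → Bool) : allR l f = l.all f := by
  induction l with
  | nil => rfl
  | cons a l ih => rw [List.all_cons, ← ih]; rfl

theorem anyR_iff {α : Type} {l : List α} {f : α → Bool} :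
    anyR l f = true ↔ ∃ a ∈ l, f a = true := by
  rw [anyR_eq, List.any_eq_true]

theorem allR_iff {α : Type} {l : List α} {f : α → Bool} :
    allR l f = true ↔ ∀ a ∈ l, f a = true := by
  rw [allR_eq, List.all_eq_true]

theorem ceq_iff {a b : Cell} : ceq a b = true ↔ a = b := by
  simp [ceq, Prod.ext_iff]

theorem memT_iff {s : St} {c : Cell} : memT s c = true ↔ ∃ t ∈ s.T, t.1 = c := by
  simp only [memT, anyR_iff, ceq_iff]

theorem memS_iff {s : St} {c : Cell} : memS s c = true ↔ c ∈ s.S := by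
  simp [memS, anyR_iff, ceq_iff]

theorem memR_iff {s : St} {a b : Cell} : memR s a b = true ↔ (a, b) ∈ s.R := by
  simp only [memR, anyR_iff, Bool.and_eq_true, ceq_iff]
  constructor
  · rintro ⟨⟨x, y⟩, h, rfl, rfl⟩; exact h
  · intro h; exact ⟨_, h, rfl, rfl⟩

theorem cadj_nb {a : ℤ × ℤ} {c d : Cell} (h : cadj c d = true) : Nb (rho a c) (rho a d) := by
  simp [cadj] at h
  simp only [Nb, rho]
  omega

theorem nb_cover {a : ℤ × ℤ} {c : Cell} (hp : pos c = true) {q : ℤ × ℤ} (h : Nb (rho a c) q) :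
    ∃ n ∈ nb c, q = rho a n := by
  obtain ⟨x, y⟩ := c
  obtain ⟨q1, q2⟩ := q
  simp [pos] at hp
  simp only [Nb, rho] at h
  simp only [nb, List.mem_cons, List.not_mem_nil, or_false, exists_eq_or_imp, exists_eq_left, rho,
    Prod.mk.injEq]
  push_cast [hp.1, hp.2]
  omega

theorem Sat.out {a : ℤ × ℤ} {s : St} (hs : Sat T A a s) {c : Cell} (h : isOut s c = true) :
    ¬ Qd (rho a c) := by
  simp [isOut] at h
  simp only [Qd, rho]
  rcases h with ⟨h1, h2⟩ | ⟨h1, h2⟩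
  · have := hs.le h1; omega
  · have := hs.be h1; omega

theorem Sat.inn {a : ℤ × ℤ} {s : St} (hs : Sat T A a s) {c : Cell} (h : isIn s c = true) :
    Qd (rho a c) := by
  simp [isIn] at h
  simp only [Qd, rho]
  have := hs.L
  have := hs.B
  omega

theorem rho_inj {a : ℤ × ℤ} {c d : Cell} (h : rho a c = rho a d) : c = d := by
  simp only [rho, Prod.mk.injEq] at h
  ext <;> omega

theorem near_bad {a : ℤ × ℤ} {s : St} (hs : Sat T A a s) {u w : Cell} {k : ℕ}
    (hb : badEnd s u w k = true) (hn : Near T (rho a u) (rho a w) k) : False := by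
  obtain ⟨h1, h2, h3, h4, h5, h6, h7, h8⟩ := hn
  simp only [badEnd, Bool.or_eq_true, Bool.and_eq_true, anyR_iff, btw, Nat.ble_eq, Nat.beq_eq,
    Nat.blt_eq] at hb
  simp only [rho] at *
  rcases hb with hb | ⟨hd, ⟨he, t, ht, hte, hbt⟩ | ⟨he, t, ht, hte, hbt⟩⟩
  · omega
  · have htT := (hs.mT t ht).1
    simp only [rho] at htT
    have g5 := h5 _ htT
    have g6 := h6 _ htT
    simp only at g5 g6
    rcases hbt with ⟨b1, b2⟩ | ⟨b1, b2⟩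
    · have := g5 (by omega) (by omega) (by omega) (by omega)
      omega
    · have := g6 (by omega) (by omega) (by omega) (by omega)
      omega
  · have htT := (hs.mT t ht).1
    simp only [rho] at htT
    have g5 := h7 _ htT
    have g6 := h8 _ htT
    simp only at g5 g6
    rcases hbt with ⟨b1, b2⟩ | ⟨b1, b2⟩
    · have := g5 (by omega) (by omega) (by omega) (by omega)
      omega
    · have := g6 (by omega) (by omega) (by omega) (by omega)
      omega

theorem walkBad_sound (hc : Cfg T A) {a : ℤ × ℤ} {s : St} (hs : Sat T A a s) (u : Cell) (f : ℕ) :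
    ∀ (k : ℕ) (t : Cell), TW T A (rho a u) k (rho a t) → walkBad s u f k t = true → False := by
  induction f with
  | zero => intro k t _ h; exact Bool.noConfusion h
  | succ f ih =>
    intro k t hw h
    change (((anyR s.T fun t' => ceq t'.1 t && Nat.beq t'.2 2) &&
      anyR s.S fun w => cadj t w && badEnd s u w k) ||
      anyR s.R fun r => ceq r.1 t && walkBad s u f (k + 1) r.2) = true at h
    simp only [Bool.or_eq_true, Bool.and_eq_true, anyR_iff, ceq_iff, Nat.beq_eq] at h
    rcases h with ⟨⟨t', ht', rfl, h2⟩, w, hw', hadj, hbad⟩ | ⟨r, hr, rfl, hr'⟩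
    · obtain ⟨m1, m2⟩ := hs.mT t' ht'
      obtain ⟨w1, w2⟩ := hs.mS w hw'
      exact near_bad hs hbad
        (hc.walk _ _ _ _ hw (hc.O_arc m1 (m2.2.1 h2) w1 w2 (cadj_nb hadj)) w1)
    · obtain ⟨r1, r2, r3⟩ := hs.mR r hr
      exact ih _ _ (hw.step r1 r3) hr'

theorem cellBad_sound (hc : Cfg T A) {a : ℤ × ℤ} {s : St} (hs : Sat T A a s) {t : Cell × ℕ}
    (ht : t ∈ s.T) (h : cellBad s t = true) : False := by
  obtain ⟨m1, mI, mO, mZ⟩ := hs.mT t ht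
  simp only [cellBad, Bool.or_eq_true, Bool.and_eq_true, anyR_iff, allR_iff, Nat.beq_eq] at h
  rcases h with ⟨h3, u, hu, hut⟩ | ⟨hp, (⟨h12, hall⟩ | hall) | hall⟩
  · obtain ⟨u1, u2⟩ := hs.mS u hu
    obtain ⟨z1, z2⟩ := mZ h3
    rcases hc.tot _ _ m1 u2 (cadj_nb hut).symm with h | h
    · exact z2 ⟨_, u1, h⟩
    · exact z1 ⟨_, u1, h⟩
  · have key : ∀ q, q ∉ T → Nb (rho a t.1) q → Qd q → False := by
      intro q hq hn hQ
      obtain ⟨n, hnn, rfl⟩ := nb_cover hp hn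
      rcases hall n hnn with h | h
      · obtain ⟨t', ht', rfl⟩ := memT_iff.1 h
        exact hq (hs.mT t' ht').1
      · exact hs.out h hQ
    rcases h12 with h | h
    · obtain ⟨u, hu, hA⟩ := mI h
      obtain ⟨g1, g2, g3⟩ := hc.adj _ _ hA
      exact key u hu g1.symm g2
    · obtain ⟨u, hu, hA⟩ := mO h
      obtain ⟨g1, g2, g3⟩ := hc.adj _ _ hA
      exact key u hu g1 g3
  · obtain ⟨x, hx, y, hy, hA⟩ := hc.out {rho a t.1} (by simpa using m1) (by simp)
    obtain rfl : x = _ := hx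
    obtain ⟨g1, g2, g3⟩ := hc.adj _ _ hA
    obtain ⟨n, hn, rfl⟩ := nb_cover hp g1
    rcases hall n hn with (h | h) | ⟨h, h'⟩
    · exact hc.asym _ _ hA (hs.mR _ (memR_iff.1 h)).1
    · exact hs.out h g3
    · obtain ⟨u1, u2⟩ := hs.mS n (memS_iff.1 h')
      exact hc.asym _ _ hA (hc.I_arc m1 (mI h) u1 u2 g1)
  · obtain ⟨x, hx, y, hy, hA⟩ := hc.inn {rho a t.1} (by simpa using m1) (by simp)
    obtain rfl : x = _ := hx
    obtain ⟨g1, g2, g3⟩ := hc.adj _ _ hA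
    obtain ⟨n, hn, rfl⟩ := nb_cover hp g1.symm
    rcases hall n hn with (h | h) | ⟨h, h'⟩
    · exact hc.asym _ _ hA (hs.mR _ (memR_iff.1 h)).1
    · exact hs.out h g2
    · obtain ⟨u1, u2⟩ := hs.mS n (memS_iff.1 h')
      exact hc.asym _ _ hA (hc.O_arc m1 (mO h) u1 u2 g1.symm)

theorem closed_sound (hc : Cfg T A) {a : ℤ × ℤ} {s : St} (hs : Sat T A a s)
    (h : closed s = true) : False := by
  simp only [closed, Bool.or_eq_true, anyR_iff, Nat.blt_eq, Bool.and_eq_true, Nat.beq_eq] at h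
  rcases h with (h | ⟨t, ht, hb⟩) | ⟨t, ht, h1, u, hu, hadj, hw⟩
  · have h1 := hc.card ((s.T.map Prod.fst).map (rho a)).toFinset (by
      intro p hp
      simp only [List.mem_toFinset, List.mem_map] at hp
      obtain ⟨c, ⟨t, ht, rfl⟩, rfl⟩ := hp
      exact (hs.mT t ht).1)
    rw [List.toFinset_card_of_nodup (hs.nd.map fun _ _ h => rho_inj h)] at h1
    simp at h1
    omega
  · exact cellBad_sound hc hs ht hb
  · obtain ⟨m1, mI, mO, mZ⟩ := hs.mT t ht
    obtain ⟨u1, u2⟩ := hs.mS u hu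
    exact walkBad_sound hc hs u 5 1 t.1
      (.base u1 m1 (hc.I_arc m1 (mI h1) u1 u2 (cadj_nb hadj).symm)) hw

theorem final_sound (hc : Cfg T A) {a : ℤ × ℤ} {s : St} (hs : Sat T A a s) (hne : s.T ≠ [])
    (h : final s = true) : False := by
  simp only [final, Bool.or_eq_true, allR_iff, Bool.and_eq_true, Nat.beq_eq] at h
  obtain ⟨x, ⟨t, ht, rfl⟩, y, hy, hA⟩ := hc.out {p | ∃ t ∈ s.T, rho a t.1 = p}
    (by rintro _ ⟨t, ht, rfl⟩; exact (hs.mT t ht).1)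
    (by
      obtain ⟨t, ht⟩ := List.exists_mem_of_ne_nil _ hne
      exact ⟨_, t, ht, rfl⟩)
  obtain ⟨⟨h13, hp⟩, hall⟩ := h t ht
  obtain ⟨m1, mI, mO, mZ⟩ := hs.mT t ht
  obtain ⟨g1, g2, g3⟩ := hc.adj _ _ hA
  obtain ⟨n, hn, rfl⟩ := nb_cover hp g1
  rcases hall n hn with (h | h) | h
  · obtain ⟨t', ht', rfl⟩ := memT_iff.1 h
    exact hy ⟨t', ht', rfl⟩
  · obtain ⟨u1, u2⟩ := hs.mS n (memS_iff.1 h)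
    rcases h13 with h1 | h3
    · exact hc.asym _ _ hA (hc.I_arc m1 (mI h1) u1 u2 g1)
    · exact (mZ h3).2 ⟨_, u1, hA⟩
  · exact hs.out h g3

theorem setTy_eq (c : Cell) (y : ℕ) (l : List (Cell × ℕ)) :
    setTy c y l = l.map fun t => (t.1, cond (ceq t.1 c) y t.2) := by
  induction l with
  | nil => rfl
  | cons a l ih => rw [List.map_cons, ← ih]; rfl

theorem Sat.setTy {a : ℤ × ℤ} {s : St} (hs : Sat T A a s) {c : Cell} {y : ℕ}
    (hy : tyOk T A (rho a c) y) : Sat T A a { s with T := setTy c y s.T } := by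
  refine ⟨?_, ?_, hs.mS, hs.mR, hs.L, hs.le, hs.B, hs.be⟩
  · simp only [setTy_eq, List.map_map]
    exact hs.nd
  · simp only [setTy_eq, List.mem_map]
    rintro _ ⟨t, ht, rfl⟩
    obtain ⟨m1, m2⟩ := hs.mT t ht
    refine ⟨m1, ?_⟩
    cases h : ceq t.1 c
    · exact m2
    · rw [ceq_iff] at h
      subst h
      exact hy

theorem setTy_ne {c : Cell} {y : ℕ} {l : List (Cell × ℕ)} (h : l ≠ []) : setTy c y l ≠ [] := by
  rw [setTy_eq]; simpa using h

theorem fN_eq (n : ℕ) (k : ℕ → Bool) : fN n k = k n := by cases n <;> rfl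

theorem fC_eq (c : Cell) (k : Cell → Bool) : fC c k = k c := by
  obtain ⟨x, y⟩ := c
  change fN x (fun x => fN y fun y => k (x, y)) = _
  rw [fN_eq, fN_eq]

theorem search_sound (hc : Cfg T A) (a : ℤ × ℤ) (f : ℕ) :
    ∀ s : St, search f s = true → s.T ≠ [] → Sat T A a s → False := by
  induction f with
  | zero => intro s h; intros; exact Bool.noConfusion h
  | succ f ih =>
    intro s h hne hs
    have hu : search (f + 1) s = (closed s || Mv.rec (final s)
     (Nat.ble 1 s.L && search f { s with L := s.L - 1 } && search f { s with le := true })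
     (Nat.ble 1 s.B && search f { s with B := s.B - 1 } && search f { s with be := true })
     (fun c => fC c fun c => isIn s c && !memT s c && search f { s with S := c :: s.S } &&
        search f { s with T := (c, 0) :: s.T })
     (fun c => search f { s with T := setTy c 1 s.T } && search f { s with T := setTy c 2 s.T } &&
        search f { s with T := setTy c 3 s.T })
     (fun a b => cadj a b && memT s a && memT s b &&
        search f { s with R := (a, b) :: s.R } && search f { s with R := (b, a) :: s.R })
      (next s)) := rfl
    rw [hu, Bool.or_eq_true] at h
    rcases h with h | h
    · exact closed_sound hc hs h
    cases hn : next s with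
    | none => rw [hn] at h; exact final_sound hc hs hne h
    | left =>
      rw [hn] at h
      simp only [Bool.and_eq_true, Nat.ble_eq] at h
      obtain ⟨⟨h1, h2⟩, h3⟩ := h
      have hL := hs.L
      by_cases h0 : a.1 + s.L - 16 = 0
      · exact ih _ h3 hne ⟨hs.nd, hs.mT, hs.mS, hs.mR, hs.L, fun _ => h0, hs.B, hs.be⟩
      · by_cases hle : s.le = true
        · exact h0 (hs.le hle)
        · exact ih _ h2 hne ⟨hs.nd, hs.mT, hs.mS, hs.mR, by simp only; omega,
            fun h => (hle h).elim, hs.B, hs.be⟩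
    | bot =>
      rw [hn] at h
      simp only [Bool.and_eq_true, Nat.ble_eq] at h
      obtain ⟨⟨h1, h2⟩, h3⟩ := h
      have hB := hs.B
      by_cases h0 : a.2 + s.B - 16 = 0
      · exact ih _ h3 hne ⟨hs.nd, hs.mT, hs.mS, hs.mR, hs.L, hs.le, hs.B, fun _ => h0⟩
      · by_cases hle : s.be = true
        · exact h0 (hs.be hle)
        · exact ih _ h2 hne ⟨hs.nd, hs.mT, hs.mS, hs.mR, hs.L, hs.le, by simp only; omega,
            fun h => (hle h).elim⟩
    | stat c =>
      rw [hn] at h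
      simp only [fC_eq, Bool.and_eq_true, Bool.not_eq_true'] at h
      obtain ⟨⟨⟨h1, h2⟩, h3⟩, h4⟩ := h
      have hq := hs.inn h1
      by_cases hcT : rho a c ∈ T
      · refine ih _ h4 (by simp) ⟨?_, ?_, hs.mS, hs.mR, hs.L, hs.le, hs.B, hs.be⟩
        · simp only [List.map_cons, List.nodup_cons]
          refine ⟨fun hm => ?_, hs.nd⟩
          obtain ⟨t, ht, htc⟩ := List.mem_map.1 hm
          have := memT_iff.2 ⟨t, ht, htc⟩
          rw [h2] at this
          exact Bool.noConfusion this
        · intro t ht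
          rcases List.mem_cons.1 ht with rfl | ht
          · exact ⟨hcT, by simp [tyOk]⟩
          · exact hs.mT t ht
      · refine ih _ h3 hne ⟨hs.nd, hs.mT, ?_, hs.mR, hs.L, hs.le, hs.B, hs.be⟩
        intro t ht
        rcases List.mem_cons.1 ht with rfl | ht
        · exact ⟨hcT, hq⟩
        · exact hs.mS t ht
    | typ c =>
      rw [hn] at h
      simp only [Bool.and_eq_true] at h
      obtain ⟨⟨h1, h2⟩, h3⟩ := h
      by_cases hI : tyI T A (rho a c)
      · exact ih _ h1 (setTy_ne hne) (hs.setTy ⟨fun _ => hI, by simp, by simp⟩)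
      by_cases hO : tyO T A (rho a c)
      · exact ih _ h2 (setTy_ne hne) (hs.setTy ⟨by simp, fun _ => hO, by simp⟩)
      · exact ih _ h3 (setTy_ne hne) (hs.setTy ⟨by simp, by simp, fun _ => ⟨hI, hO⟩⟩)
    | arc c d =>
      rw [hn] at h
      simp only [Bool.and_eq_true] at h
      obtain ⟨⟨⟨⟨h1, h2⟩, h3⟩, h4⟩, h5⟩ := h
      obtain ⟨t, ht, rfl⟩ := memT_iff.1 h2
      obtain ⟨t', ht', rfl⟩ := memT_iff.1 h3
      have m1 := (hs.mT t ht).1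
      have m2 := (hs.mT t' ht').1
      rcases hc.tot _ _ m1 (hc.quad _ m2) (cadj_nb h1) with hA | hA
      · refine ih _ h4 hne ⟨hs.nd, hs.mT, hs.mS, ?_, hs.L, hs.le, hs.B, hs.be⟩
        intro r hr
        rcases List.mem_cons.1 hr with rfl | hr
        · exact ⟨hA, m1, m2⟩
        · exact hs.mR r hr
      · refine ih _ h5 hne ⟨hs.nd, hs.mT, hs.mS, ?_, hs.L, hs.le, hs.B, hs.be⟩
        intro r hr
        rcases List.mem_cons.1 hr with rfl | hr
        · exact ⟨hA, m2, m1⟩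
        · exact hs.mR r hr

/-! ### The search succeeds from every start -/

theorem search_r2 : search 60 (start (17, 16) 2) = true := by decide +kernel
theorem search_r3 : search 60 (start (17, 16) 3) = true := by decide +kernel
theorem search_l2 : search 60 (start (15, 16) 2) = true := by decide +kernel
theorem search_l3 : search 60 (start (15, 16) 3) = true := by decide +kernel

theorem Nb.swap {p q : ℤ × ℤ} (h : Nb p q) : Nb p.swap q.swap := by
  unfold Nb at *; simp only [Prod.fst_swap, Prod.snd_swap]; omega

/-- Reflection of a configuration in the diagonal. -/
theorem Cfg.swap (h : Cfg T A) :
    Cfg (Prod.swap ⁻¹' T) (fun p q => A p.swap q.swap) := by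
  have hTW : ∀ u k t, TW (Prod.swap ⁻¹' T) (fun p q => A p.swap q.swap) u k t →
      TW T A u.swap k t.swap := by
    intro u k t hw
    induction hw with
    | base h1 h2 h3 => exact .base h1 h2 h3
    | step _ h1 h2 ih => exact .step ih h1 h2
  have himg : ∀ X : Set (ℤ × ℤ), X ⊆ Prod.swap ⁻¹' T → X.Nonempty →
      Prod.swap ⁻¹' X ⊆ T ∧ (Prod.swap ⁻¹' X).Nonempty := by
    rintro X hX ⟨x, hx⟩
    refine ⟨fun p hp => by simpa using hX hp, x.swap, by simpa using hx⟩
  refine ⟨?_, ?_, ?_, ?_, ?_, ?_, ?_, ?_⟩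
  · intro p hp
    have := h.quad _ hp
    exact ⟨this.2, this.1⟩
  · intro F hF
    have := h.card (F.map (Equiv.prodComm ℤ ℤ).toEmbedding) (by
      intro p hp
      obtain ⟨q, hq, rfl⟩ := Finset.mem_map.1 hp
      exact hF q hq)
    simpa using this
  · intro p q hA
    obtain ⟨h1, h2, h3⟩ := h.adj _ _ hA
    exact ⟨by simpa using h1.swap, ⟨h2.2, h2.1⟩, ⟨h3.2, h3.1⟩⟩
  · intro p q hp hq hn
    exact h.tot _ _ hp ⟨hq.2, hq.1⟩ hn.swap
  · intro p q hA
    exact h.asym _ _ hA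
  · intro X hX hne
    obtain ⟨a, b⟩ := himg X hX hne
    obtain ⟨x, hx, y, hy, hA⟩ := h.out _ a b
    exact ⟨x.swap, hx, y.swap, hy, by simpa using hA⟩
  · intro X hX hne
    obtain ⟨a, b⟩ := himg X hX hne
    obtain ⟨x, hx, y, hy, hA⟩ := h.inn _ a b
    exact ⟨x.swap, hx, y.swap, hy, by simpa using hA⟩
  · intro u k t w hw hA hwT
    obtain ⟨h1, h2, h3, h4, h5, h6, h7, h8⟩ := h.walk _ _ _ _ (hTW _ _ _ hw) hA hwT
    simp only [Prod.fst_swap, Prod.snd_swap] at *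
    refine ⟨by omega, by omega, by omega, by omega, ?_, ?_, ?_, ?_⟩
    · intro c hc; exact h7 c.swap hc
    · intro c hc; exact h8 c.swap hc
    · intro c hc; exact h5 c.swap hc
    · intro c hc; exact h6 c.swap hc

theorem Cfg.start_false (h : Cfg T A) {a : ℤ × ℤ} {b : Cell} {y : ℕ} (hb : b ≠ (16, 16))
    (ha : a ∈ T) (hI : tyI T A a) (hbT : rho a b ∈ T) (hty : tyOk T A (rho a b) y)
    (hA : A a (rho a b)) (hs : search 60 (start b y) = true) : False := by
  have e : rho a (16, 16) = a := by ext <;> simp [rho]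
  have qa := h.quad _ ha
  have qb := h.quad _ hbT
  simp only [Qd, rho] at qa qb
  refine search_sound h a 60 _ hs (by simp [start]) ⟨?_, ?_, ?_, ?_, ?_, ?_, ?_, ?_⟩
  · simp [start, hb.symm]
  · simp only [start, List.mem_cons, List.not_mem_nil, or_false]
    rintro t (rfl | rfl)
    · rw [e]; exact ⟨ha, fun _ => hI, by simp, by simp⟩
    · exact ⟨hbT, hty⟩
  · simp [start]
  · simp only [start, List.mem_cons, List.not_mem_nil, or_false]
    rintro r rfl
    rw [e]; exact ⟨hA, ha, hbT⟩
  · simp only [start]; omega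
  · simp [start]
  · simp only [start]; omega
  · simp [start]

theorem Cfg.horizontal (h : Cfg T A) {a b : ℤ × ℤ} (ha : a ∈ T) (hb : b ∈ T) (hA : A a b)
    (hI : tyI T A a) (hnI : ¬ tyI T A b) (e : a.2 = b.2) : False := by
  obtain ⟨hn, -, -⟩ := h.adj _ _ hA
  have hty : tyOk T A b 2 ∨ tyOk T A b 3 := by
    by_cases hO : tyO T A b
    · exact .inl ⟨by simp, fun _ => hO, by simp⟩
    · exact .inr ⟨by simp, by simp, fun _ => ⟨hnI, hO⟩⟩
  have : b = rho a (17, 16) ∨ b = rho a (15, 16) := by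
    obtain ⟨a1, a2⟩ := a
    obtain ⟨b1, b2⟩ := b
    simp only [Nb, rho, Prod.mk.injEq] at *
    omega
  rcases this with rfl | rfl <;> rcases hty with hty | hty
  · exact h.start_false (by simp) ha hI hb hty hA search_r2
  · exact h.start_false (by simp) ha hI hb hty hA search_r3
  · exact h.start_false (by simp) ha hI hb hty hA search_l2
  · exact h.start_false (by simp) ha hI hb hty hA search_l3

theorem Cfg.false (h : Cfg T A) (hne : T.Nonempty) : False := by
  obtain ⟨x, hx, y, hy, hyx⟩ := h.inn T subset_rfl hne
  obtain ⟨a, ⟨ha, hI⟩, b, hb, hA⟩ := h.out {t | t ∈ T ∧ tyI T A t} (fun _ h => h.1)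
    ⟨x, hx, y, hy, hyx⟩
  have hbT : b ∈ T := by
    by_contra hbT
    obtain ⟨u, hu, hua⟩ := hI
    exact h.inOut ha hu hbT hua hA
  have hnI : ¬ tyI T A b := fun h' => hb ⟨hbT, h'⟩
  obtain ⟨hn, -, -⟩ := h.adj _ _ hA
  have tys : ∀ t, tyI T A t ↔ tyI (Prod.swap ⁻¹' T) (fun p q => A p.swap q.swap) t.swap := by
    intro t
    constructor
    · rintro ⟨u, hu, hut⟩; exact ⟨u.swap, by simpa using hu, by simpa using hut⟩
    · rintro ⟨u, hu, hut⟩; exact ⟨u.swap, by simpa using hu, by simpa using hut⟩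
  rcases hn with ⟨e, -⟩ | ⟨e, -⟩
  · exact h.swap.horizontal (a := a.swap) (b := b.swap) (by simpa using ha) (by simpa using hbT)
      (by simpa using hA) ((tys a).1 hI) (fun h' => hnI ((tys b).2 h')) e
  · exact h.horizontal ha hbT hA hI hnI e

/-! ### Walks and geodesics -/

section General

variable {V : Type*} {D : V → V → Prop}

theorem walk_snoc {k : ℕ} {f : ℕ → V} {u t w : V} (h : IsDirWalk D k f u t) (hw : D t w) :
    IsDirWalk D (k + 1) (fun i => if i ≤ k then f i else w) u w := by
  obtain ⟨h0, hk, hs⟩ := h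
  refine ⟨by simp [h0], by simp, ?_⟩
  intro i hi
  by_cases hik : i < k
  · have h1 : i ≤ k := hik.le
    have h2 : i + 1 ≤ k := hik
    simpa [h1, h2] using hs i hik
  · obtain rfl : i = k := by omega
    simpa [hk] using hw

theorem exists_geodesic {u v : V} (h : DirReachable D u v) : ∃ l g, IsGeodesic D l g u v := by
  classical
  have h' : ∃ k, ∃ f, IsDirWalk D k f u v := h
  obtain ⟨g, hg⟩ := Nat.find_spec h'
  exact ⟨Nat.find h', g, hg, fun _ p hp => Nat.find_min' h' (Exists.intro p hp)⟩

/-- A walk that starts inside a set and ends outside leaves it along some arc. -/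
theorem walk_leaves {X : Set V} {k : ℕ} {f : ℕ → V} {u v : V} (h : IsDirWalk D k f u v)
    (hu : u ∈ X) (hv : v ∉ X) : ∃ i < k, f i ∈ X ∧ f (i + 1) ∉ X := by
  obtain ⟨h0, hk, hs⟩ := h
  by_contra! hc
  have : ∀ i ≤ k, f i ∈ X := by
    intro i
    induction i with
    | zero => intro _; rwa [h0]
    | succ i ih => intro hi; exact hc i (by omega) (ih (by omega))
  exact hv (hk ▸ this k le_rfl)

variable {e : V → ℤ × ℤ}

theorem walk_dist (hD : ∀ v w, D v w → Nb (e v) (e w)) {k : ℕ} {f : ℕ → V} {u v : V}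
    (h : IsDirWalk D k f u v) (i j : ℕ) (hj : i + j ≤ k) :
    ((e (f i)).1 - (e (f (i + j))).1) + ((e (f i)).2 - (e (f (i + j))).2) ≤ j ∧
    ((e (f i)).1 - (e (f (i + j))).1) + ((e (f (i + j))).2 - (e (f i)).2) ≤ j ∧
    ((e (f (i + j))).1 - (e (f i)).1) + ((e (f i)).2 - (e (f (i + j))).2) ≤ j ∧
    ((e (f (i + j))).1 - (e (f i)).1) + ((e (f (i + j))).2 - (e (f i)).2) ≤ j ∧
    ((e (f (i + j))).1 - (e (f i)).1 + ((e (f (i + j))).2 - (e (f i)).2) - j) % 2 = 0 := by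
  induction j with
  | zero => simp
  | succ j ih =>
    obtain ⟨h1, h2, h3, h4, h5⟩ := ih (by omega)
    have hn := hD _ _ (h.2.2 (i + j) (by omega))
    rw [← add_assoc]
    unfold Nb at hn
    push_cast
    generalize e (f (i + j)) = p at *
    generalize e (f (i + j + 1)) = q at *
    generalize e (f i) = r at *
    omega

theorem cfg_of_embedding {C T2 : Set V} (hinj : Function.Injective e)
    (hadj : ∀ v w, D v w → Nb (e v) (e w)) (htot : ∀ v w, Nb (e v) (e w) → D v w ∨ D w v)
    (hasym : ∀ v w, D v w → ¬ D w v) (hstr : StrongConnected D) (hC : DConvex D C)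
    (hQ : ∀ v, Qd (e v)) (hT : ∀ v ∈ T2, v ∉ C)
    (hclo : ∀ v ∈ T2, ∀ w, Nb (e v) (e w) → w ∈ T2 ∨ w ∈ C)
    (hsur : ∀ v ∈ T2, ∀ q, Qd q → Nb (e v) q → ∃ w, e w = q)
    (hfin : T2.Finite) (hcard : T2.ncard ≤ 5) :
    Cfg (e '' T2) (fun p q => ∃ v w, e v = p ∧ e w = q ∧ D v w) := by
  obtain ⟨⟨c0, hc0⟩, hconv⟩ := hC
  have memi : ∀ v, e v ∈ e '' T2 ↔ v ∈ T2 := fun v => hinj.mem_set_image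
  refine ⟨?_, ?_, ?_, ?_, ?_, ?_, ?_, ?_⟩
  · rintro _ ⟨v, hv, rfl⟩; exact hQ v
  · intro F hF
    rw [← Set.ncard_coe_finset]
    exact (Set.ncard_le_ncard (fun p hp => hF p hp) (hfin.image e)).trans
      ((Set.ncard_image_le hfin).trans hcard)
  · rintro _ _ ⟨v, w, rfl, rfl, h⟩
    exact ⟨hadj _ _ h, hQ v, hQ w⟩
  · rintro _ q ⟨v, hv, rfl⟩ hq hn
    obtain ⟨w, rfl⟩ := hsur v hv q hq hn
    rcases htot _ _ hn with h | h
    · exact .inl ⟨v, w, rfl, rfl, h⟩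
    · exact .inr ⟨w, v, rfl, rfl, h⟩
  · rintro _ _ ⟨v, w, rfl, rfl, h⟩ ⟨w', v', h1, h2, h'⟩
    rw [hinj h1, hinj h2] at h'
    exact hasym _ _ h h'
  · rintro X hX ⟨x, hx⟩
    obtain ⟨x0, hx0, rfl⟩ := hX hx
    obtain ⟨k, f, hf⟩ := hstr x0 c0
    obtain ⟨i, hi, h1, h2⟩ := walk_leaves (X := e ⁻¹' X) hf hx
      (fun h => hT _ ((memi _).1 (hX h)) hc0)
    exact ⟨_, h1, _, h2, _, _, rfl, rfl, hf.2.2 i hi⟩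
  · rintro X hX ⟨x, hx⟩
    obtain ⟨x0, hx0, rfl⟩ := hX hx
    obtain ⟨k, f, hf⟩ := hstr c0 x0
    obtain ⟨i, hi, h1, h2⟩ := walk_leaves (X := (e ⁻¹' X)ᶜ) hf
      (fun h => hT _ ((memi _).1 (hX h)) hc0) (fun h => h hx)
    exact ⟨_, not_not.1 h2, _, h1, _, _, rfl, rfl, hf.2.2 i hi⟩
  · have key : ∀ u k t, TW (e '' T2) (fun p q => ∃ v w, e v = p ∧ e w = q ∧ D v w) u k t →
        ∃ u0 ∈ C, ∃ t0 ∈ T2, e u0 = u ∧ e t0 = t ∧ ∃ f, IsDirWalk D k f u0 t0 := by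
      intro u k t h
      induction h with
      | base h1 h2 h3 =>
        obtain ⟨v, w, rfl, rfl, h⟩ := h3
        rw [memi] at h1 h2
        refine ⟨v, (hclo w h2 v (hadj _ _ h).symm).resolve_left h1, w, h2, rfl, rfl,
          fun i => if i = 0 then v else w, by simp, by simp, ?_⟩
        intro i hi
        obtain rfl : i = 0 := by omega
        simpa using h
      | step _ h1 h2 ih =>
        obtain ⟨u0, hu0, t0, ht0, rfl, rfl, f, hf⟩ := ih
        obtain ⟨v, w, hv, rfl, h⟩ := h1
        rw [hinj hv] at h
        exact ⟨u0, hu0, w, (memi _).1 h2, rfl, rfl, _, walk_snoc hf h⟩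
    rintro u k t w hTW ⟨t', w0, ht', rfl, hD⟩ hw
    obtain ⟨u0, hu0, t0, ht0, rfl, rfl, f, hf⟩ := key _ _ _ hTW
    rw [hinj ht'] at hD
    rw [memi] at hw
    have hw0 : w0 ∈ C := (hclo t0 ht0 w0 (hadj _ _ hD)).resolve_left hw
    obtain ⟨F, hF, hFk⟩ : ∃ F, IsDirWalk D (k + 1) F u0 w0 ∧ F k = t0 :=
      ⟨_, walk_snoc hf hD, by simp [hf.2.1]⟩
    obtain ⟨l, g, hg, hmin⟩ := exists_geodesic (hstr u0 w0)
    have hlk : l ≤ k := by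
      have h1 := hmin _ _ hF
      by_contra hlt
      obtain rfl : l = k + 1 := by omega
      have := hconv u0 hu0 w0 hw0 _ _ ⟨hF, hmin⟩ k (by omega)
      rw [hFk] at this
      exact hT _ ht0 this
    have hgC := hconv u0 hu0 w0 hw0 _ _ ⟨hg, hmin⟩
    have d1 := walk_dist hadj hF 0 (k + 1) (by omega)
    have d2 := walk_dist hadj hg 0 l (by omega)
    simp only [zero_add] at d1 d2
    rw [hF.1, hF.2.1] at d1
    rw [hg.1, hg.2.1] at d2
    have hl : (l : ℤ) ≤ k - 1 := by
      push_cast at d1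
      omega
    clear d1
    have hcut : ∀ i : ℕ, i ≤ l → ∀ c ∈ T2, e (g i) ≠ e c := by
      intro i hi c hc h
      exact hT c hc (hinj h ▸ hgC i hi)
    have hpt : ∀ i : ℕ, i ≤ l → ∀ c ∈ T2, ¬ (
      (((e u0).1 - (e (g i)).1) + ((e u0).2 - (e (g i)).2) ≤ i ∧
       ((e u0).1 - (e (g i)).1) + ((e (g i)).2 - (e u0).2) ≤ i ∧
       ((e (g i)).1 - (e u0).1) + ((e u0).2 - (e (g i)).2) ≤ i ∧
       ((e (g i)).1 - (e u0).1) + ((e (g i)).2 - (e u0).2) ≤ i) →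
      (((e (g i)).1 - (e w0).1) + ((e (g i)).2 - (e w0).2) ≤ l - i ∧
       ((e (g i)).1 - (e w0).1) + ((e w0).2 - (e (g i)).2) ≤ l - i ∧
       ((e w0).1 - (e (g i)).1) + ((e (g i)).2 - (e w0).2) ≤ l - i ∧
       ((e w0).1 - (e (g i)).1) + ((e w0).2 - (e (g i)).2) ≤ l - i) →
       (e (g i)).1 = (e c).1 ∧ (e (g i)).2 = (e c).2) := by
      intro i hi c hc h
      have a1 := walk_dist hadj hg 0 i (by omega)
      have a2 := walk_dist hadj hg i (l - i) (by omega)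
      rw [Nat.add_sub_cancel' hi, hg.2.1] at a2
      rw [zero_add, hg.1] at a1
      push_cast [hi] at a2
      have := h (by omega) (by omega)
      exact hcut i hi c hc (Prod.ext this.1 this.2)
    refine ⟨by omega, by omega, by omega, by omega, ?_, ?_, ?_, ?_⟩
    · rintro _ ⟨c, hc, rfl⟩ e1 e2 e3 e4
      by_contra hlt
      refine hpt ((e c).2 - (e u0).2).toNat (by omega) c hc ?_
      rw [Int.toNat_of_nonneg (by omega)]
      generalize e (g _) = p
      omega
    · rintro _ ⟨c, hc, rfl⟩ e1 e2 e3 e4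
      by_contra hlt
      refine hpt ((e u0).2 - (e c).2).toNat (by omega) c hc ?_
      rw [Int.toNat_of_nonneg (by omega)]
      generalize e (g _) = p
      omega
    · rintro _ ⟨c, hc, rfl⟩ e1 e2 e3 e4
      by_contra hlt
      refine hpt ((e c).1 - (e u0).1).toNat (by omega) c hc ?_
      rw [Int.toNat_of_nonneg (by omega)]
      generalize e (g _) = p
      omega
    · rintro _ ⟨c, hc, rfl⟩ e1 e2 e3 e4
      by_contra hlt
      refine hpt ((e u0).1 - (e c).1).toNat (by omega) c hc ?_
      rw [Int.toNat_of_nonneg (by omega)]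
      generalize e (g _) = p
      omega

/-- Orient a path so that the image of `t` precedes the image of `x`. -/
theorem exists_coord {n : ℕ} (x t : Fin n) (h : t ≠ x) : ∃ c : Fin n → ℤ,
    Function.Injective c ∧ (∀ a, 0 ≤ c a) ∧ c t < c x ∧
    (∀ z, 0 ≤ z → z ≤ c x → ∃ a, c a = z) ∧
    (∀ a b : Fin n, (c a + 1 = c b ∨ c b + 1 = c a) ↔
      (a.val + 1 = b.val ∨ b.val + 1 = a.val)) := by
  rcases lt_or_gt_of_ne h with h | h
  · refine ⟨fun a => a.val, ?_, by simp, by simpa using h, ?_, by intro a b; simp only; omega⟩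
    · intro a b hab; ext; simpa using hab
    · intro z h0 hz
      have := x.isLt
      simp only at hz
      refine ⟨⟨z.toNat, by omega⟩, by simp [h0]⟩
  · refine ⟨fun a => n - 1 - a.val, ?_, ?_, ?_, ?_, by intro a b; simp only; omega⟩
    · intro a b hab; ext; simp only at hab; omega
    · intro a; simp only; omega
    · simp only; omega
    · intro z h0 hz
      simp only at hz
      refine ⟨⟨(n - 1 - z).toNat, by omega⟩, by simp only; omega⟩

theorem exists_full {α β : Type*} [Fintype α] [Finite β] {C : Set (α × β)}
    (h : Cᶜ.ncard < Fintype.card α) : ∃ x, ∀ y, (x, y) ∈ C := by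
  by_contra! hc
  have : (Set.univ : Set α) ⊆ Prod.fst '' Cᶜ := by
    intro x _
    obtain ⟨y, hy⟩ := hc x
    exact ⟨(x, y), hy, rfl⟩
  have h1 := Set.ncard_le_ncard this
  have h2 := Set.ncard_image_le (f := Prod.fst) (Cᶜ : Set (α × β)).toFinite
  rw [Set.ncard_univ, Nat.card_eq_fintype_card] at h1
  omega

theorem exists_full' {α β : Type*} [Fintype β] [Finite α] {C : Set (α × β)}
    (h : Cᶜ.ncard < Fintype.card β) : ∃ y, ∀ x, (x, y) ∈ C := by
  by_contra! hc
  have : (Set.univ : Set β) ⊆ Prod.snd '' Cᶜ := by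
    intro y _
    obtain ⟨x, hx⟩ := hc y
    exact ⟨(x, y), hx, rfl⟩
  have h1 := Set.ncard_le_ncard this
  have h2 := Set.ncard_image_le (f := Prod.snd) (Cᶜ : Set (α × β)).toFinite
  rw [Set.ncard_univ, Nat.card_eq_fintype_card] at h1
  omega

theorem grid_adj {n m : ℕ} (v w : Fin n × Fin m) : (gridGraph n m).Adj v w ↔
    ((v.1.val + 1 = w.1.val ∨ w.1.val + 1 = v.1.val) ∧ v.2 = w.2) ∨
    ((v.2.val + 1 = w.2.val ∨ w.2.val + 1 = v.2.val) ∧ v.1 = w.1) := by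
  simp [gridGraph, SimpleGraph.boxProd_adj, SimpleGraph.pathGraph_adj]

theorem no_large_convex {n m : ℕ} {D : Fin n × Fin m → Fin n × Fin m → Prop}
    (hO : IsOrientation (gridGraph n m) D) (hS : StrongConnected D) {C : Set (Fin n × Fin m)}
    (hC : DConvex D C) (hne : C ≠ Set.univ) (h5 : Cᶜ.ncard ≤ 5) (hn : Cᶜ.ncard < n)
    (hm : Cᶜ.ncard < m) : False := by
  obtain ⟨x0, hx0⟩ := exists_full (C := C) (by simpa using hn)
  obtain ⟨y0, hy0⟩ := exists_full' (C := C) (by simpa using hm)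
  obtain ⟨t0, ht0⟩ := (Set.ne_univ_iff_exists_notMem C).1 hne
  obtain ⟨cx, ix, zx, lx, sx, ax⟩ := exists_coord x0 t0.1 (by
    rintro rfl; exact ht0 (hx0 _))
  obtain ⟨cy, iy, zy, ly, sy, ay⟩ := exists_coord y0 t0.2 (by
    rintro rfl; exact ht0 (hy0 _))
  obtain ⟨o1, o2, o3⟩ := hO
  let e : Fin n × Fin m → ℤ × ℤ := fun v => (cx v.1, cy v.2)
  have hnb : ∀ v w, Nb (e v) (e w) ↔ (gridGraph n m).Adj v w := by
    intro v w
    rw [grid_adj]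
    simp only [Nb, e, ax, ay, ix.eq_iff, iy.eq_iff]
    tauto
  let T2 : Set (Fin n × Fin m) := {v | v ∉ C ∧ cx v.1 < cx x0 ∧ cy v.2 < cy y0}
  have hcfg := cfg_of_embedding (D := D) (e := e) (C := C) (T2 := T2)
    (by
      intro v w h
      simp only [e, Prod.mk.injEq] at h
      exact Prod.ext (ix h.1) (iy h.2))
    (fun v w h => (hnb v w).2 (o1 _ _ h))
    (fun v w h => o2 _ _ ((hnb v w).1 h)) o3 hS hC
    (fun v => ⟨zx _, zy _⟩) (fun v hv => hv.1)
    (by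
      rintro v ⟨v1, v2, v3⟩ w hw
      by_cases hwC : w ∈ C
      · exact .inr hwC
      refine .inl ⟨hwC, ?_, ?_⟩
      · have : cx w.1 ≠ cx x0 := fun h => hwC (by
          have := hx0 w.2
          rwa [← ix h] at this)
        simp only [Nb, e] at hw
        omega
      · have : cy w.2 ≠ cy y0 := fun h => hwC (by
          have := hy0 w.1
          rwa [← iy h] at this)
        simp only [Nb, e] at hw
        omega)
    (by
      rintro v ⟨v1, v2, v3⟩ q ⟨q1, q2⟩ hq
      simp only [Nb, e] at hq
      obtain ⟨a, ha⟩ := sx q.1 q1 (by omega)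
      obtain ⟨b, hb⟩ := sy q.2 q2 (by omega)
      exact ⟨(a, b), Prod.ext ha hb⟩)
    (Set.toFinite _)
    ((Set.ncard_le_ncard (fun v hv => hv.1)).trans h5)
  exact hcfg.false ⟨e t0, t0, ⟨ht0, lx, ly⟩, rfl⟩

/-! ### Small convex sets -/

theorem small_nbrs {C : Set V} (hasym : ∀ v w, D v w → ¬ D w v) (hS : StrongConnected D)
    (hC : DConvex D C) {c c' : V} (hc : c ∈ C) (hc' : c' ∈ C) (hne : c ≠ c') :
    ∃ a ∈ C, ∃ b ∈ C, a ≠ b ∧ D c a ∧ D b c := by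
  obtain ⟨k, f, hf, hmin⟩ := exists_geodesic (hS c c')
  obtain ⟨l, g, hg, hmin'⟩ := exists_geodesic (hS c' c)
  have hk : 0 < k := by
    rcases Nat.eq_zero_or_pos k with rfl | h
    · exact (hne (hf.1.symm.trans hf.2.1)).elim
    · exact h
  have hl : 0 < l := by
    rcases Nat.eq_zero_or_pos l with rfl | h
    · exact (hne (hg.2.1.symm.trans hg.1)).elim
    · exact h
  have h1 := hf.2.2 0 hk
  have h2 := hg.2.2 (l - 1) (by omega)
  rw [hf.1, zero_add] at h1
  rw [Nat.sub_add_cancel hl, hg.2.1] at h2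
  refine ⟨f 1, hC.2 _ hc _ hc' _ _ ⟨hf, hmin⟩ 1 hk, g (l - 1),
    hC.2 _ hc' _ hc _ _ ⟨hg, hmin'⟩ _ (by omega), ?_, h1, h2⟩
  intro h
  rw [← h] at h2
  exact hasym _ _ h1 h2

theorem Nb.common {p q x y z : ℤ × ℤ} (hpq : p ≠ q) (hxy : x ≠ y) (hxz : x ≠ z) (hyz : y ≠ z)
    (x1 : Nb x p) (x2 : Nb x q) (y1 : Nb y p) (y2 : Nb y q) (z1 : Nb z p) (z2 : Nb z q) :
    False := by
  have key : ∀ x, Nb x p → Nb x q → (x = (p.1, q.2) ∨ x = (q.1, p.2)) ∨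
      (2 * x.1 = p.1 + q.1 ∧ 2 * x.2 = p.2 + q.2) := by
    rintro ⟨x1, x2⟩ h1 h2
    have : p.1 ≠ q.1 ∨ p.2 ≠ q.2 := by
      by_contra! h; exact hpq (Prod.ext h.1 h.2)
    simp only [Nb, Prod.mk.injEq] at *
    omega
  have kx := key x x1 x2
  have ky := key y y1 y2
  have kz := key z z1 z2
  have : p.1 ≠ q.1 ∨ p.2 ≠ q.2 := by
    by_contra! h; exact hpq (Prod.ext h.1 h.2)
  simp only [ne_eq, Prod.ext_iff, Nb] at *
  omega

theorem two_three {V : Type*} {e : V → ℤ × ℤ} (hinj : Function.Injective e) {P R : Finset V}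
    (hP : P.card = 2) (hR : R.card = 3)
    (h : ∀ r ∈ R, ∃ a ∈ P, ∃ b ∈ P, a ≠ b ∧ Nb (e r) (e a) ∧ Nb (e r) (e b)) : False := by
  classical
  obtain ⟨p, q, hpq, rfl⟩ := Finset.card_eq_two.1 hP
  obtain ⟨x, y, z, hxy, hxz, hyz, rfl⟩ := Finset.card_eq_three.1 hR
  have key : ∀ r ∈ ({x, y, z} : Finset V), Nb (e r) (e p) ∧ Nb (e r) (e q) := by
    intro r hr
    obtain ⟨a, ha, b, hb, hab, h1, h2⟩ := h r hr
    simp only [Finset.mem_insert, Finset.mem_singleton] at ha hb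
    rcases ha with rfl | rfl <;> rcases hb with rfl | rfl
    · exact (hab rfl).elim
    · exact ⟨h1, h2⟩
    · exact ⟨h2, h1⟩
    · exact (hab rfl).elim
  have kx := key x (by simp)
  have ky := key y (by simp)
  have kz := key z (by simp)
  exact Nb.common (hinj.ne hpq) (hinj.ne hxy) (hinj.ne hxz) (hinj.ne hyz) kx.1 kx.2 ky.1 ky.2
    kz.1 kz.2

theorem no_small_convex {n m : ℕ} {D : Fin n × Fin m → Fin n × Fin m → Prop}
    (hO : IsOrientation (gridGraph n m) D) (hS : StrongConnected D) {C : Set (Fin n × Fin m)}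
    (hC : DConvex D C) (h2 : 2 ≤ C.ncard) : 4 ≤ C.ncard ∧ C.ncard ≠ 5 := by
  classical
  obtain ⟨o1, o2, o3⟩ := hO
  let e : Fin n × Fin m → ℤ × ℤ := fun v => (v.1.val, v.2.val)
  have hinj : Function.Injective e := by
    intro v w h
    simp only [e, Prod.mk.injEq, Nat.cast_inj] at h
    exact Prod.ext (Fin.ext h.1) (Fin.ext h.2)
  have hnb : ∀ v w, D v w → Nb (e v) (e w) := by
    intro v w h
    have := (grid_adj v w).1 (o1 _ _ h)
    simp only [Fin.ext_iff] at this
    simp only [Nb, e]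
    omega
  have hfin : C.Finite := Set.toFinite C
  have two : ∀ c ∈ C, ∃ a ∈ C, ∃ b ∈ C, a ≠ b ∧ Nb (e c) (e a) ∧ Nb (e c) (e b) := by
    intro c hc
    obtain ⟨c', hc', hne⟩ := Set.exists_ne_of_one_lt_ncard (by omega : 1 < C.ncard) c
    obtain ⟨a, ha, b, hb, hab, h1, h2⟩ := small_nbrs o3 hS hC hc hc' hne.symm
    exact ⟨a, ha, b, hb, hab, hnb _ _ h1, (hnb _ _ h2).symm⟩
  let P := hfin.toFinset.filter fun v => ((e v).1 + (e v).2) % 2 = 0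
  let R := hfin.toFinset.filter fun v => ¬ ((e v).1 + (e v).2) % 2 = 0
  have hcard : P.card + R.card = C.ncard := by
    rw [Set.ncard_eq_toFinset_card C hfin]
    exact Finset.card_filter_add_card_filter_not _
  have memP : ∀ v, v ∈ P ↔ v ∈ C ∧ ((e v).1 + (e v).2) % 2 = 0 := by
    intro v; simp only [P, Finset.mem_filter, Set.Finite.mem_toFinset]
  have memR : ∀ v, v ∈ R ↔ v ∈ C ∧ ¬ ((e v).1 + (e v).2) % 2 = 0 := by
    intro v; simp only [R, Finset.mem_filter, Set.Finite.mem_toFinset]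
  have par : ∀ p q : ℤ × ℤ, Nb p q → ((p.1 + p.2) % 2 = 0 ↔ ¬ (q.1 + q.2) % 2 = 0) := by
    intro p q h
    simp only [Nb] at h
    omega
  have hPR : ∀ v ∈ P, ∃ a ∈ R, ∃ b ∈ R, a ≠ b ∧ Nb (e v) (e a) ∧ Nb (e v) (e b) := by
    intro v hv
    rw [memP] at hv
    obtain ⟨a, ha, b, hb, hab, h1, h2⟩ := two v hv.1
    exact ⟨a, (memR a).2 ⟨ha, (par _ _ h1).1 hv.2⟩, b, (memR b).2 ⟨hb, (par _ _ h2).1 hv.2⟩,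
      hab, h1, h2⟩
  have hRP : ∀ v ∈ R, ∃ a ∈ P, ∃ b ∈ P, a ≠ b ∧ Nb (e v) (e a) ∧ Nb (e v) (e b) := by
    intro v hv
    rw [memR] at hv
    obtain ⟨a, ha, b, hb, hab, h1, h2⟩ := two v hv.1
    exact ⟨a, (memP a).2 ⟨ha, (par _ _ h1.symm).2 hv.2⟩, b,
      (memP b).2 ⟨hb, (par _ _ h2.symm).2 hv.2⟩, hab, h1, h2⟩
  have two_le : ∀ P R : Finset (Fin n × Fin m),
      (∀ v ∈ P, ∃ a ∈ R, ∃ b ∈ R, a ≠ b ∧ Nb (e v) (e a) ∧ Nb (e v) (e b)) →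
      0 < P.card → 1 < R.card := by
    intro P R h hP
    obtain ⟨v, hv⟩ := Finset.card_pos.1 hP
    obtain ⟨a, ha, b, hb, hab, -⟩ := h v hv
    exact Finset.one_lt_card.2 ⟨a, ha, b, hb, hab⟩
  have q1 := two_le P R hPR
  have q2 := two_le R P hRP
  refine ⟨by omega, fun h5 => ?_⟩
  rcases (by omega : (P.card = 2 ∧ R.card = 3) ∨ (R.card = 2 ∧ P.card = 3)) with h | h
  · exact two_three hinj h.1 h.2 hRP
  · exact two_three hinj h.1 h.2 hPR

/-- A value of the spectrum is the size of some proper convex set. -/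
theorem exists_convex_of_mem {n m k : ℕ} (hn : 2 ≤ n) (hm : 2 ≤ m)
    (h : k ∈ strongConvexitySpectrum (gridGraph n m)) :
    ∃ D : Fin n × Fin m → Fin n × Fin m → Prop, IsOrientation (gridGraph n m) D ∧
      StrongConnected D ∧ ∃ C, DConvex D C ∧ C ≠ Set.univ ∧ C.ncard = k := by
  obtain ⟨D, hO, hS, hk⟩ := h
  refine ⟨D, hO, hS, ?_⟩
  have hne : {k | ∃ C : Set (Fin n × Fin m), DConvex D C ∧ C ≠ Set.univ ∧ C.ncard = k}.Nonempty := by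
    let c : Fin n × Fin m := (⟨0, by omega⟩, ⟨0, by omega⟩)
    let d : Fin n × Fin m := (⟨1, by omega⟩, ⟨0, by omega⟩)
    refine ⟨_, {c}, ⟨⟨c, rfl⟩, ?_⟩, ?_, rfl⟩
    · rintro u rfl v rfl k f ⟨hf, hmin⟩ i hi
      have := hmin 0 (fun _ => c) ⟨rfl, rfl, by simp⟩
      obtain rfl : k = 0 := by omega
      obtain rfl : i = 0 := by omega
      exact hf.1
    · intro h
      have : d ∈ ({c} : Set (Fin n × Fin m)) := h ▸ Set.mem_univ d
      simp [c, d] at this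
  have hbd : BddAbove
      {k | ∃ C : Set (Fin n × Fin m), DConvex D C ∧ C ≠ Set.univ ∧ C.ncard = k} := by
    refine ⟨Nat.card (Fin n × Fin m), ?_⟩
    rintro k ⟨C, -, -, rfl⟩
    exact Set.ncard_le_card C
  have := Nat.sSup_mem hne hbd
  rw [convexityNumber] at hk
  rwa [hk] at this

theorem large_notMem {n m i : ℕ} (hn : 2 ≤ n) (hm : 2 ≤ m) (h2 : 2 ≤ i) (h6 : i ≤ 6)
    (hin : i ≤ n) (him : i ≤ m) : n * m - (i - 1) ∉ strongConvexitySpectrum (gridGraph n m) := by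
  intro h
  obtain ⟨D, hO, hS, C, hC, hne, hcard⟩ := exists_convex_of_mem hn hm h
  have h1 := Set.ncard_add_ncard_compl C
  have h3 : Nat.card (Fin n × Fin m) = n * m := by simp
  have h4 : n ≤ n * m := Nat.le_mul_of_pos_right n (by omega)
  exact no_large_convex hO hS hC hne (by omega) (by omega) (by omega)

theorem small_notMem {n m k : ℕ} (hn : 2 ≤ n) (hm : 2 ≤ m) (hk : k = 2 ∨ k = 3 ∨ k = 5) :
    k ∉ strongConvexitySpectrum (gridGraph n m) := by
  intro h
  obtain ⟨D, hO, hS, C, hC, hne, hcard⟩ := exists_convex_of_mem hn hm h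
  have := no_small_convex hO hS hC (by omega)
  omega

end General

end GridConv

/-- Forbidden values of the strong convexity spectrum of a grid. -/
theorem forbidden_values_strongConvexitySpectrum_grid (n m : ℕ) (hn : 2 ≤ n) (hm : 2 ≤ m) :
    (2 ∉ strongConvexitySpectrum (gridGraph n m) ∧
     3 ∉ strongConvexitySpectrum (gridGraph n m) ∧
     5 ∉ strongConvexitySpectrum (gridGraph n m) ∧
     n * m - 1 ∉ strongConvexitySpectrum (gridGraph n m)) ∧
    (∀ i ∈ ({3, 4, 5, 6} : Set ℕ), i ≤ n → i ≤ m →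
      n * m - (i - 1) ∉ strongConvexitySpectrum (gridGraph n m)) := by
  refine ⟨⟨GridConv.small_notMem hn hm (by omega), GridConv.small_notMem hn hm (by omega),
    GridConv.small_notMem hn hm (by omega), ?_⟩, ?_⟩
  · exact GridConv.large_notMem (i := 2) hn hm le_rfl (by omega) hn hm
  · intro i hi hin him
    simp only [Set.mem_insert_iff, Set.mem_singleton_iff] at hi
    exact GridConv.large_notMem hn hm (by omega) (by omega) hin him
end
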